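/- arXiv:1401.6252 — 3 statements merged into one kernel-verified Lean document; each statement's English description precedes it below -/
import Mathlib

section
/- The bordered double circulant Z4-code of length 24 determined by (α,β,γ) = (0,1,1) and circulant first row (1,3,1,0,3,3,0,3,2,2,2) is a self-dual Type I Z4-code with minimum Lee weight 10 and minimum Euclidean weight 12. -/
open Finset

namespace Z4Note

variable {ι : Type*} [Fintype ι]

/-- Hamming weight of a binary vector. -/
def hWt (x : ι → ZMod 2) : ℕ := (Finset.univ.filter fun i => x i ≠ 0).card

/-- Lee value of an element of `ZMod 4`:  0 ↦ 0, 1 ↦ 1, 2 ↦ 2, 3 ↦ 1. -/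
def leeVal (a : ZMod 4) : ℕ := min a.val (4 - a.val)

/-- Lee weight `n₁(x) + 2 n₂(x) + n₃(x)`. -/
def leeWt (x : ι → ZMod 4) : ℕ := ∑ i, leeVal (x i)

/-- Euclidean weight `n₁(x) + 4 n₂(x) + n₃(x)`. -/
def eucWt (x : ι → ZMod 4) : ℕ := ∑ i, (leeVal (x i)) ^ 2

/-- Number of coordinates of `x` equal to `a`. -/
def nCount (a : ZMod 4) (x : ι → ZMod 4) : ℕ := (Finset.univ.filter fun i => x i = a).card

/-- Dual of a `ZMod 4`-code (as a set), w.r.t. the standard inner product. -/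
def dualZ4 (C : Set (ι → ZMod 4)) : Set (ι → ZMod 4) :=
  {x | ∀ y ∈ C, ∑ i, x i * y i = 0}

/-- Dual of a binary code (as a set), w.r.t. the standard inner product. -/
def dual2 (C : Set (ι → ZMod 2)) : Set (ι → ZMod 2) :=
  {x | ∀ y ∈ C, ∑ i, x i * y i = 0}

/-- A `ZMod 4`-code is self-dual if it equals its dual. -/
def SelfDualZ4 (C : Submodule (ZMod 4) (ι → ZMod 4)) : Prop :=
  (C : Set (ι → ZMod 4)) = dualZ4 (C : Set (ι → ZMod 4))

/-- A binary code is self-dual if it equals its dual. -/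
def SelfDual2 (D : Submodule (ZMod 2) (ι → ZMod 2)) : Prop :=
  (D : Set (ι → ZMod 2)) = dual2 (D : Set (ι → ZMod 2))

/-- Coordinatewise reduction modulo 2. -/
def res2 (x : ι → ZMod 4) : ι → ZMod 2 :=
  fun i => ZMod.castHom (by norm_num : (2:ℕ) ∣ 4) (ZMod 2) (x i)

/-- The residue code `C⁽¹⁾ = {c mod 2 : c ∈ C}`. -/
def residue (C : Set (ι → ZMod 4)) : Set (ι → ZMod 2) := res2 '' C

/-- Minimum Lee weight among nonzero codewords. -/
noncomputable def minLee (C : Set (ι → ZMod 4)) : ℕ := sInf {d | ∃ x ∈ C, x ≠ 0 ∧ leeWt x = d}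

/-- Minimum Euclidean weight among nonzero codewords. -/
noncomputable def minEuc (C : Set (ι → ZMod 4)) : ℕ := sInf {d | ∃ x ∈ C, x ≠ 0 ∧ eucWt x = d}

/-- Minimum Hamming weight among nonzero codewords of a binary code. -/
noncomputable def minHam (C : Set (ι → ZMod 2)) : ℕ := sInf {d | ∃ x ∈ C, x ≠ 0 ∧ hWt x = d}

/-- A binary code is doubly even if all weights are divisible by 4. -/
def DoublyEven (C : Set (ι → ZMod 2)) : Prop := ∀ x ∈ C, 4 ∣ hWt x

/-- A binary code is singly even if some codeword has weight not divisible by 4. -/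
def SinglyEven (C : Set (ι → ZMod 2)) : Prop := ∃ x ∈ C, ¬ 4 ∣ hWt x

/-- A self-dual `ZMod 4`-code is Type II if all Euclidean weights are divisible by 8. -/
def TypeII (C : Set (ι → ZMod 4)) : Prop := ∀ x ∈ C, 8 ∣ eucWt x

/-- The doubly even subcode of a binary code. -/
def evenSubcode (D : Set (ι → ZMod 2)) : Set (ι → ZMod 2) := {x ∈ D | 4 ∣ hWt x}

/-- The shadow `S = D₀^⊥ \ D` of a binary code. -/
def shadow (D : Set (ι → ZMod 2)) : Set (ι → ZMod 2) := dual2 (evenSubcode D) \ D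

/-- A binary singly even self-dual code is s-extremal if equality holds in the
Bachoc–Gaborit bound relating the minimum weight of the code and of its shadow. -/
def SExtremal (D : Submodule (ZMod 2) (ι → ZMod 2)) : Prop :=
  SelfDual2 D ∧ SinglyEven (D : Set (ι → ZMod 2)) ∧
  ((¬ (Fintype.card ι % 24 = 22 ∧
        minHam (D : Set (ι → ZMod 2)) = 4 * (Fintype.card ι / 24) + 6)) →
      minHam (shadow (D : Set (ι → ZMod 2))) + 2 * minHam (D : Set (ι → ZMod 2)) =
        Fintype.card ι / 2 + 4) ∧
  ((Fintype.card ι % 24 = 22 ∧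
        minHam (D : Set (ι → ZMod 2)) = 4 * (Fintype.card ι / 24) + 6) →
      minHam (shadow (D : Set (ι → ZMod 2))) + 2 * minHam (D : Set (ι → ZMod 2)) =
        Fintype.card ι / 2 + 8)

/-- Equivalence of `ZMod 4`-codes: coordinate permutation together with sign changes. -/
def Z4Equiv (C C' : Set (ι → ZMod 4)) : Prop :=
  ∃ σ : Equiv.Perm ι, ∃ ε : ι → ZMod 4, (∀ i, ε i = 1 ∨ ε i = -1) ∧
    C' = (fun x => fun i => ε i * x (σ i)) '' C

/-- Covering radius of a binary code. -/
noncomputable def covRad (C : Set (ι → ZMod 2)) : ℕ :=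
  sInf {R | ∀ v : ι → ZMod 2, ∃ c ∈ C, hWt (v - c) ≤ R}

/-- Entry `(i,j)` of the circulant matrix with first row `r`. -/
def circEntry {m : ℕ} (r : Fin m → ZMod 4) (i j : Fin m) : ZMod 4 := r (j - i)

/-- Entry `(i,j)` of the negacirculant matrix with first row `r`. -/
def negaEntry {m : ℕ} (r : Fin m → ZMod 4) (i j : Fin m) : ZMod 4 :=
  if i.val ≤ j.val then r (j - i) else - r (j - i)

/-- The bordered part `B` of the generator matrix of a bordered double circulant code. -/
def bdcB {m : ℕ} (α β γ : ZMod 4) (r : Fin m → ZMod 4) :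
    Fin (m+1) → Fin (m+1) → ZMod 4 :=
  Fin.cases (Fin.cases α fun _ => β) (fun i' => Fin.cases γ fun j' => circEntry r i' j')

/-- Row `i` of the generator matrix `(I | B)` of a bordered double circulant code. -/
def bdcRow {m : ℕ} (α β γ : ZMod 4) (r : Fin m → ZMod 4) (i : Fin (m+1)) :
    (Fin (m+1) ⊕ Fin (m+1)) → ZMod 4 :=
  Sum.elim (fun j => if j = i then 1 else 0) (bdcB α β γ r i)

/-- The bordered double circulant code of length `2(m+1)`. -/
def bdcCode {m : ℕ} (α β γ : ZMod 4) (r : Fin m → ZMod 4) :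
    Submodule (ZMod 4) ((Fin (m+1) ⊕ Fin (m+1)) → ZMod 4) :=
  Submodule.span (ZMod 4) (Set.range (bdcRow α β γ r))

/-- The block matrix `[[A, B], [-Bᵀ, Aᵀ]]` built from negacirculant `A`, `B`. -/
def fourNegaM {n : ℕ} (a b : Fin n → ZMod 4) :
    (Fin n ⊕ Fin n) → (Fin n ⊕ Fin n) → ZMod 4
  | Sum.inl i, Sum.inl j => negaEntry a i j
  | Sum.inl i, Sum.inr j => negaEntry b i j
  | Sum.inr i, Sum.inl j => - negaEntry b j i
  | Sum.inr i, Sum.inr j => negaEntry a j i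

/-- Row `i` of the generator matrix `(I | M)` of a four-negacirculant code. -/
def fourNegaRow {n : ℕ} (a b : Fin n → ZMod 4) (i : Fin n ⊕ Fin n) :
    ((Fin n ⊕ Fin n) ⊕ (Fin n ⊕ Fin n)) → ZMod 4 :=
  Sum.elim (fun j => if j = i then 1 else 0) (fourNegaM a b i)

/-- The four-negacirculant code of length `4n`. -/
def fourNegaCode {n : ℕ} (a b : Fin n → ZMod 4) :
    Submodule (ZMod 4) (((Fin n ⊕ Fin n) ⊕ (Fin n ⊕ Fin n)) → ZMod 4) :=
  Submodule.span (ZMod 4) (Set.range (fourNegaRow a b))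

end Z4Note
namespace D24

open Z4Note

/-- Population count of a 6-bit number by table lookup. -/
def p6 (m : ℕ) : ℕ :=
  (45832594422234749298105850410103375650784739062395034443511311641156132086032 >>> (4 * m)) % 16

/-- Population count of the lowest 12 bits. -/
def pop (n : ℕ) : ℕ := p6 (n % 64) + p6 ((n / 64) % 64)

/-- The leaf test: used Lee weight plus Lee weight of the bit-sliced vector is at least 10. -/
def leaf (used lo hi : ℕ) : Bool :=
  Nat.beq used 0 || Nat.ble 10 (used + pop lo + 2 * pop (hi ^^^ (hi &&& lo)))

/-- Search through all combinations of rows of Lee weight at most the budget. -/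
def chk : List (ℕ × ℕ) → ℕ → ℕ → ℕ → ℕ → Bool
  | [], _, used, lo, hi => leaf used lo hi
  | _ :: _, 0, used, lo, hi => leaf used lo hi
  | r :: rs, 1, used, lo, hi =>
      chk rs 1 used lo hi &&
      (chk rs 0 (used + 1) (lo ^^^ r.1) (hi ^^^ r.2 ^^^ (lo &&& r.1)) &&
       chk rs 0 (used + 1) (lo ^^^ r.1) (hi ^^^ r.2 ^^^ r.1 ^^^ (lo &&& r.1)))
  | r :: rs, b + 2, used, lo, hi =>
      chk rs (b + 2) used lo hi &&
      (chk rs (b + 1) (used + 1) (lo ^^^ r.1) (hi ^^^ r.2 ^^^ (lo &&& r.1)) &&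
       (chk rs (b + 1) (used + 1) (lo ^^^ r.1) (hi ^^^ r.2 ^^^ r.1 ^^^ (lo &&& r.1)) &&
        chk rs b (used + 2) lo (hi ^^^ r.1)))

/-- Element of `ZMod 4` with given low and high bit. -/
def bv : Bool → Bool → ZMod 4
  | false, false => 0
  | true, false => 1
  | false, true => 2
  | true, true => 3

/-- Coordinate `j` of a bit-sliced vector. -/
def val (lo hi : ℕ) (j : ℕ) : ZMod 4 := bv (lo.testBit j) (hi.testBit j)

theorem val_add1 (lo hi a b j : ℕ) :
    val (lo ^^^ a) (hi ^^^ b ^^^ (lo &&& a)) j = val lo hi j + 1 * val a b j := by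
  simp only [val, Nat.testBit_xor, Nat.testBit_and]
  generalize lo.testBit j = p, hi.testBit j = q, a.testBit j = r, b.testBit j = s
  revert p q r s; decide

theorem val_add3 (lo hi a b j : ℕ) :
    val (lo ^^^ a) (hi ^^^ b ^^^ a ^^^ (lo &&& a)) j = val lo hi j + 3 * val a b j := by
  simp only [val, Nat.testBit_xor, Nat.testBit_and]
  generalize lo.testBit j = p, hi.testBit j = q, a.testBit j = r, b.testBit j = s
  revert p q r s; decide

theorem val_add2 (lo hi a b j : ℕ) :
    val lo (hi ^^^ a) j = val lo hi j + 2 * val a b j := by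
  simp only [val, Nat.testBit_xor]
  generalize lo.testBit j = p, hi.testBit j = q, a.testBit j = r, b.testBit j = s
  revert p q r s; decide

theorem p6_eq : ∀ m < 64, p6 m = ∑ j ∈ range 6, (m.testBit j).toNat := by decide +kernel

theorem pop_eq (n : ℕ) : pop n = ∑ j ∈ range 12, (n.testBit j).toNat := by
  rw [pop, p6_eq _ (Nat.mod_lt _ (by norm_num)), p6_eq _ (Nat.mod_lt _ (by norm_num)),
    show (12 : ℕ) = 6 + 6 from rfl, Finset.sum_range_add]
  congr 1
  · refine Finset.sum_congr rfl fun j hj => ?_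
    rw [show (64 : ℕ) = 2 ^ 6 from rfl, Nat.testBit_mod_two_pow]
    simp [Finset.mem_range.1 hj]
  · refine Finset.sum_congr rfl fun j hj => ?_
    rw [show (64 : ℕ) = 2 ^ 6 from rfl, Nat.testBit_mod_two_pow, Nat.testBit_div_two_pow]
    simp [Finset.mem_range.1 hj, add_comm]

theorem leeVal_bv : ∀ p q : Bool,
    leeVal (bv p q) = p.toNat + 2 * (q ^^ (q && p)).toNat := by decide

theorem pop_lee (lo hi : ℕ) :
    pop lo + 2 * pop (hi ^^^ (hi &&& lo)) = ∑ j ∈ range 12, leeVal (val lo hi j) := by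
  rw [pop_eq, pop_eq, Finset.mul_sum, ← Finset.sum_add_distrib]
  refine Finset.sum_congr rfl fun j _ => ?_
  simp only [val, leeVal_bv, Nat.testBit_xor, Nat.testBit_and]

/-- Lee weight of a list. -/
def lsum : List (ZMod 4) → ℕ
  | [] => 0
  | a :: l => leeVal a + lsum l

/-- Coordinate of a linear combination of rows. -/
def lin : List (ZMod 4) → List (ℕ × ℕ) → ℕ → ZMod 4
  | a :: l, r :: rs, j => a * val r.1 r.2 j + lin l rs j
  | _, _, _ => 0

theorem leeVal_eq_zero : ∀ a : ZMod 4, leeVal a = 0 → a = 0 := by decide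

theorem lin_zero : ∀ (u : List (ZMod 4)) (rs : List (ℕ × ℕ)) (j : ℕ), lsum u = 0 →
    lin u rs j = 0
  | [], _, _, _ => by simp [lin]
  | _ :: _, [], _, _ => by simp [lin]
  | a :: l, r :: rs, j, h => by
      simp only [lsum, Nat.add_eq_zero_iff] at h
      simp [lin, leeVal_eq_zero a h.1, lin_zero l rs j h.2]

theorem leaf_spec (used lo hi : ℕ) (h : leaf used lo hi = true) :
    used = 0 ∨ 10 ≤ used + ∑ j ∈ range 12, leeVal (val lo hi j) := by
  rw [← pop_lee]
  simp only [leaf, Bool.or_eq_true, Nat.beq_eq, Nat.ble_eq] at h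
  omega

theorem four_cases : ∀ a : ZMod 4, (a = 0 ∧ leeVal a = 0) ∨ (a = 1 ∧ leeVal a = 1) ∨
    (a = 3 ∧ leeVal a = 1) ∨ (a = 2 ∧ leeVal a = 2) := by decide

theorem chk_spec : ∀ (rs : List (ℕ × ℕ)) (b used lo hi : ℕ), chk rs b used lo hi = true →
    ∀ u : List (ZMod 4), u.length = rs.length → lsum u ≤ b →
      used + lsum u = 0 ∨
      10 ≤ used + lsum u + ∑ j ∈ range 12, leeVal (val lo hi j + lin u rs j) := by
  intro rs
  induction rs with
  | nil =>
    intro b used lo hi h u hu hb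
    have : u = [] := by simpa using hu
    subst this
    simpa [lsum, lin] using leaf_spec used lo hi (by simpa [chk] using h)
  | cons r rs ih =>
    intro b used lo hi h u hu hb
    match u, hu with
    | a :: l, hu =>
    have hl : l.length = rs.length := by simpa using hu
    match b, h, hb with
    | 0, h, hb =>
      have h0 : lsum (a :: l) = 0 := by omega
      simp only [lin_zero _ _ _ h0, h0, add_zero]
      exact leaf_spec used lo hi (by simpa [chk] using h)
    | 1, h, hb =>
      simp only [chk, Bool.and_eq_true] at h
      obtain ⟨h0, h1, h3⟩ := h
      simp only [lsum] at hb ⊢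
      rcases four_cases a with ⟨ha, hv⟩ | ⟨ha, hv⟩ | ⟨ha, hv⟩ | ⟨ha, hv⟩
      · have := ih _ _ _ _ h0 l hl (by omega)
        rw [hv]
        simpa [lin, ha] using this
      · have := ih _ _ _ _ h1 l hl (by omega)
        simp only [val_add1] at this
        rw [hv]
        simpa only [lin, ha, add_assoc] using this
      · have := ih _ _ _ _ h3 l hl (by omega)
        simp only [val_add3] at this
        rw [hv]
        simpa only [lin, ha, add_assoc] using this
      · omega
    | b + 2, h, hb =>
      simp only [chk, Bool.and_eq_true] at h
      obtain ⟨h0, h1, h3, h2⟩ := h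
      simp only [lsum] at hb ⊢
      rcases four_cases a with ⟨ha, hv⟩ | ⟨ha, hv⟩ | ⟨ha, hv⟩ | ⟨ha, hv⟩
      · have := ih _ _ _ _ h0 l hl (by omega)
        rw [hv]
        simpa [lin, ha] using this
      · have := ih _ _ _ _ h1 l hl (by omega)
        simp only [val_add1] at this
        rw [hv]
        simpa only [lin, ha, add_assoc] using this
      · have := ih _ _ _ _ h3 l hl (by omega)
        simp only [val_add3] at this
        rw [hv]
        simpa only [lin, ha, add_assoc] using this
      · have := ih _ _ _ _ h2 l hl (by omega)
        simp only [val_add2 lo hi r.1 r.2] at this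
        rw [hv]
        simpa only [lin, ha, add_assoc] using this

theorem lsum_ofFn : ∀ (n : ℕ) (u : Fin n → ZMod 4), lsum (List.ofFn u) = ∑ i, leeVal (u i)
  | 0, u => by simp [lsum]
  | n + 1, u => by simp [List.ofFn_succ, lsum, Fin.sum_univ_succ, lsum_ofFn n]

theorem lin_ofFn : ∀ (n : ℕ) (u : Fin n → ZMod 4) (R : Fin n → ℕ × ℕ) (j : ℕ),
    lin (List.ofFn u) (List.ofFn R) j = ∑ i, u i * val (R i).1 (R i).2 j
  | 0, u, R, j => by simp [lin]
  | n + 1, u, R, j => by simp [List.ofFn_succ, lin, Fin.sum_univ_succ, lin_ofFn n]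

/-- Consequence of a successful search for a 12 by 12 matrix. -/
theorem chk_matrix (R : Fin 12 → ℕ × ℕ) (M : Fin 12 → Fin 12 → ZMod 4)
    (hM : ∀ i j, val (R i).1 (R i).2 j.val = M i j)
    (hc : chk (List.ofFn R) 4 0 0 0 = true) (u : Fin 12 → ZMod 4)
    (hu : ∑ i, leeVal (u i) ≤ 4) (hu0 : ∑ i, leeVal (u i) ≠ 0) :
    10 ≤ ∑ i, leeVal (u i) + ∑ j, leeVal (∑ i, u i * M i j) := by
  have h := chk_spec _ 4 0 0 0 hc (List.ofFn u) (by simp) (by rw [lsum_ofFn]; exact hu)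
  rw [lsum_ofFn] at h
  rcases h with h | h
  · omega
  · rw [Finset.sum_range] at h
    simp only [lin_ofFn, hM] at h
    simpa [val, bv] using h

def R1 : Fin 12 → ℕ × ℕ := ![(4094, 0), (367, 3940), (733, 3786), (1465, 3478), (2929, 2862),
  (1763, 1630), (3525, 3260), (2955, 2426), (1815, 758), (3629, 1516), (3163, 3032), (2231, 1970)]

def R2 : Fin 12 → ℕ × ℕ := ![(4094, 4094), (3491, 1055), (2887, 2109), (1679, 123), (3357, 245),
  (2619, 489), (1143, 977), (2285, 1953), (475, 3905), (949, 3715), (1897, 3335), (3793, 2575)]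

/-- The matrix `B`. -/
def B : Fin 12 → Fin 12 → ZMod 4 := bdcB 0 1 1 ![1,3,1,0,3,3,0,3,2,2,2]

theorem chk1 : chk (List.ofFn R1) 4 0 0 0 = true := by decide +kernel

theorem chk2 : chk (List.ofFn R2) 4 0 0 0 = true := by decide +kernel

theorem R1_eq : ∀ i j : Fin 12, val (R1 i).1 (R1 i).2 j.val = B i j := by decide +kernel

theorem R2_eq : ∀ i j : Fin 12, val (R2 i).1 (R2 i).2 j.val = - B j i := by decide +kernel

theorem B_mul : ∀ i k : Fin 12, ∑ j, B i j * B k j = if i = k then -1 else 0 := by decide +kernel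

theorem B_mul' : ∀ i k : Fin 12, ∑ j, B j i * B j k = if i = k then -1 else 0 := by decide +kernel

/-- The code. -/
abbrev D : Submodule (ZMod 4) ((Fin 12 ⊕ Fin 12) → ZMod 4) :=
  bdcCode 0 1 1 ![1,3,1,0,3,3,0,3,2,2,2]

theorem mem_D (x : (Fin 12 ⊕ Fin 12) → ZMod 4) :
    x ∈ D ↔ ∀ j, x (Sum.inr j) = ∑ i, x (Sum.inl i) * B i j := by
  unfold D bdcCode
  rw [Submodule.mem_span_range_iff_exists_fun]
  constructor
  · rintro ⟨c, rfl⟩ j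
    simp [Finset.sum_apply, bdcRow, B]
  · intro h
    refine ⟨fun i => x (Sum.inl i), ?_⟩
    funext k
    rcases k with k | k
    · simp [Finset.sum_apply, bdcRow]
    · rw [h k]; simp [Finset.sum_apply, bdcRow, B]

theorem left_eq (x : (Fin 12 ⊕ Fin 12) → ZMod 4) (hx : x ∈ D) (k : Fin 12) :
    x (Sum.inl k) = ∑ j, x (Sum.inr j) * (- B k j) := by
  rw [mem_D] at hx
  simp only [hx, Finset.sum_mul]
  rw [Finset.sum_comm]
  have : ∀ i, ∑ j, x (Sum.inl i) * B i j * (- B k j) =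
      x (Sum.inl i) * (if i = k then 1 else 0) := by
    intro i
    have h := B_mul i k
    calc _ = - (x (Sum.inl i) * ∑ j, B i j * B k j) := by
            rw [Finset.mul_sum, ← Finset.sum_neg_distrib]
            exact Finset.sum_congr rfl fun j _ => by ring
      _ = _ := by rw [h]; split_ifs <;> simp
  simp only [this]
  simp

theorem orth (x y : (Fin 12 ⊕ Fin 12) → ZMod 4) (hx : x ∈ D) (hy : y ∈ D) :
    ∑ i, x i * y i = 0 := by
  rw [Fintype.sum_sum_type]
  have h1 : ∑ j, x (Sum.inr j) * y (Sum.inr j) =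
      ∑ k, y (Sum.inl k) * ∑ j, x (Sum.inr j) * B k j := by
    simp only [(mem_D y).1 hy, Finset.mul_sum]
    rw [Finset.sum_comm]
    exact Finset.sum_congr rfl fun j _ => Finset.sum_congr rfl fun k _ => by ring
  rw [h1, ← Finset.sum_add_distrib]
  refine Finset.sum_eq_zero fun k _ => ?_
  rw [left_eq x hx k]
  simp only [mul_neg, Finset.sum_neg_distrib]
  ring

theorem row_mem (i : Fin 12) : bdcRow 0 1 1 ![1,3,1,0,3,3,0,3,2,2,2] i ∈ D :=
  Submodule.subset_span ⟨i, rfl⟩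

theorem selfDual : SelfDualZ4 D := by
  apply Set.Subset.antisymm
  · intro x hx y hy
    exact orth x y hx hy
  · intro x hx
    have h : ∀ i, x (Sum.inl i) = - ∑ j, B i j * x (Sum.inr j) := by
      intro i
      have h := hx _ (row_mem i)
      rw [Fintype.sum_sum_type] at h
      simp only [bdcRow, Sum.elim_inl, Sum.elim_inr, mul_ite, mul_one, mul_zero,
        Finset.sum_ite_eq', Finset.mem_univ, if_true] at h
      rw [eq_neg_of_add_eq_zero_left h]
      congr 1
      exact Finset.sum_congr rfl fun j _ => mul_comm _ _
    refine (mem_D x).2 fun k => ?_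
    simp only [h, neg_mul, Finset.sum_mul, Finset.sum_neg_distrib]
    rw [Finset.sum_comm]
    have : ∀ j, ∑ i, B i j * x (Sum.inr j) * B i k =
        x (Sum.inr j) * (if j = k then -1 else 0) := by
      intro j
      rw [← B_mul' j k, Finset.mul_sum]
      exact Finset.sum_congr rfl fun i _ => by ring
    simp only [this]
    simp

theorem ten_le (x : (Fin 12 ⊕ Fin 12) → ZMod 4) (hx : x ∈ D) (h0 : x ≠ 0) : 10 ≤ leeWt x := by
  have hR : (fun j => x (Sum.inr j)) = fun j => ∑ i, x (Sum.inl i) * B i j :=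
    funext ((mem_D x).1 hx)
  have hL : (fun j => x (Sum.inl j)) = fun k => ∑ j, x (Sum.inr j) * (- B k j) :=
    funext (left_eq x hx)
  have z : ∀ f : Fin 12 → ZMod 4, ∑ i, leeVal (f i) = 0 → ∀ i, f i = 0 := by
    intro f hf i
    exact leeVal_eq_zero _ (Finset.sum_eq_zero_iff.1 hf i (Finset.mem_univ i))
  have hl0 : ∑ i, leeVal (x (Sum.inl i)) ≠ 0 := by
    intro h
    have := z _ h
    apply h0
    funext k
    rcases k with k | k
    · exact this k
    · rw [(mem_D x).1 hx]; simp [this]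
  have hr0 : ∑ i, leeVal (x (Sum.inr i)) ≠ 0 := by
    intro h
    have := z _ h
    apply h0
    funext k
    rcases k with k | k
    · rw [left_eq x hx]; simp [this]
    · exact this k
  unfold leeWt
  rw [Fintype.sum_sum_type]
  by_cases hl : ∑ i, leeVal (x (Sum.inl i)) ≤ 4
  · have := chk_matrix R1 B R1_eq chk1 (fun i => x (Sum.inl i)) hl hl0
    simp only [← (mem_D x).1 hx] at this
    exact this
  by_cases hr : ∑ i, leeVal (x (Sum.inr i)) ≤ 4
  · have := chk_matrix R2 (fun i j => - B j i) R2_eq chk2 (fun i => x (Sum.inr i)) hr hr0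
    simp only [← left_eq x hx] at this
    omega
  omega

theorem sq_cast : ∀ a : ZMod 4, (((leeVal a) ^ 2 : ℕ) : ZMod 4) = a * a := by decide

theorem four_dvd (x : (Fin 12 ⊕ Fin 12) → ZMod 4) (hx : x ∈ D) : 4 ∣ eucWt x := by
  rw [← ZMod.natCast_eq_zero_iff, eucWt, Nat.cast_sum]
  simp only [sq_cast]
  exact orth x x hx hx

theorem lee_le_euc (x : (Fin 12 ⊕ Fin 12) → ZMod 4) : leeWt x ≤ eucWt x :=
  Finset.sum_le_sum fun _ _ => Nat.le_self_pow (by norm_num) _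

/-- A codeword of Lee weight 10. -/
def wL : (Fin 12 ⊕ Fin 12) → ZMod 4 :=
  Sum.elim ![0, 2, 0, 0, 1, 0, 0, 0, 0, 0, 0, 0] ![3, 0, 0, 0, 1, 1, 3, 0, 1, 3, 0, 3]

/-- A codeword of Euclidean weight 12. -/
def wE : (Fin 12 ⊕ Fin 12) → ZMod 4 :=
  Sum.elim ![1, 0, 0, 0, 0, 0, 0, 0, 0, 0, 0, 0] ![0, 1, 1, 1, 1, 1, 1, 1, 1, 1, 1, 1]

theorem wL_mem : wL ∈ D := (mem_D _).2 (by decide +kernel)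

theorem wE_mem : wE ∈ D := (mem_D _).2 (by decide +kernel)

theorem wL_wt : leeWt wL = 10 := by decide +kernel

theorem wE_wt : eucWt wE = 12 := by decide +kernel

theorem wL_ne : wL ≠ 0 := fun h => absurd (congrFun h (Sum.inl 1)) (by decide)

theorem wE_ne : wE ≠ 0 := fun h => absurd (congrFun h (Sum.inl 0)) (by decide)

end D24

open Z4Note in
/-- the bordered double circulant code `D_{24,1}` is a self-dual Type I
`ZMod 4`-code with minimum Lee weight 10 and minimum Euclidean weight 12. -/
theorem bdc_code_D24_1_properties :
    let D : Submodule (ZMod 4) ((Fin 12 ⊕ Fin 12) → ZMod 4) :=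
      bdcCode 0 1 1 ![1,3,1,0,3,3,0,3,2,2,2]
    SelfDualZ4 D ∧ ¬ TypeII (D : Set ((Fin 12 ⊕ Fin 12) → ZMod 4)) ∧
    minLee (D : Set ((Fin 12 ⊕ Fin 12) → ZMod 4)) = 10 ∧
    minEuc (D : Set ((Fin 12 ⊕ Fin 12) → ZMod 4)) = 12 := by
  refine ⟨D24.selfDual, ?_, ?_, ?_⟩
  · intro h
    have := h _ D24.wE_mem
    rw [D24.wE_wt] at this
    omega
  · refine IsLeast.csInf_eq ⟨⟨_, D24.wL_mem, D24.wL_ne, D24.wL_wt⟩, ?_⟩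
    rintro d ⟨x, hx, h0, rfl⟩
    exact D24.ten_le x hx h0
  · refine IsLeast.csInf_eq ⟨⟨_, D24.wE_mem, D24.wE_ne, D24.wE_wt⟩, ?_⟩
    rintro d ⟨x, hx, h0, rfl⟩
    have h1 := D24.ten_le x hx h0
    have h2 := D24.lee_le_euc x
    have h3 := D24.four_dvd x hx
    omega
end

section
/- The bordered double circulant Z4-code of length 32 determined by (α,β,γ) = (0,1,1) and circulant first row (0,0,2,2,1,0,1,0,0,2,3,3,3,1,2) is a self-dual Type II Z4-code with minimum Lee weight 14, and its residue code is a binary extremal doubly even self-dual code of length 32 (minimum Hamming weight 8). -/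
open Finset

namespace Z4Search

/-- Force evaluation of a natural number before passing it on. -/
noncomputable def force (x : ℕ) (f : ℕ → Bool) : Bool :=
  Nat.rec (f (nat_lit 0)) (fun n _ => f (Nat.succ n)) x

theorem force_eq (x : ℕ) (f : ℕ → Bool) : force x f = f x := by
  cases x <;> rfl

/-- Conjunction, written for fast kernel reduction. -/
noncomputable def bAnd (a b : Bool) : Bool := Bool.rec false b a
/-- Disjunction, written for fast kernel reduction. -/
noncomputable def bOr (a b : Bool) : Bool := Bool.rec b true a

/-- Lookup table for the number of ones in a byte. -/
noncomputable def tab : ℕ := (nat_lit 95125173855764218123276304889944061997689682402263585766959741291920687686033329201817409157123347502415384089435969498586180241031507595463600295898153685276653211633572815512294064538494957912327413386667662218713394765509704508661031522276467630197481635010039778342554499416459730172574551513689147646224)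

/-- Number of ones in a byte, through a lookup table. -/
noncomputable def byteCount (n : ℕ) : ℕ := Nat.land (Nat.shiftRight tab (Nat.mul (nat_lit 4) n)) (nat_lit 15)

/-- Number of ones among the sixteen low bits. -/
noncomputable def pc (n : ℕ) : ℕ :=
  Nat.add (byteCount (Nat.land n (nat_lit 255))) (byteCount (Nat.land (Nat.shiftRight n (nat_lit 8)) (nat_lit 255)))

/-- Final test: the total Lee weight is zero or at least 14. -/
noncomputable def leaf (s lo hi : ℕ) : Bool :=
  force (Nat.xor (Nat.lor hi lo) lo) fun m =>
  force (Nat.add s (Nat.mul (nat_lit 2) (pc m))) fun n =>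
    bOr (Nat.beq n (nat_lit 0)) (Nat.ble (nat_lit 14) n)

/-- Try all sign changes at the odd coordinates. -/
noncomputable def dfsF (s lo : ℕ) (l : List ℕ) : ℕ → Bool :=
  List.rec (fun hi => leaf s lo hi)
    (fun r _ ih hi => bAnd (ih hi) (force (Nat.xor hi r) ih)) l

/-- Choose which even coordinates are equal to two. -/
noncomputable def dfsC (p lo : ℕ) (fs l : List ℕ) : ℕ → ℕ → Bool :=
  List.rec (fun k hi => force (Nat.add k p) fun s => dfsF s lo fs hi)
    (fun r _ ih k hi => bAnd (ih k hi)
      (bOr (Nat.ble (nat_lit 5) k) (force (Nat.xor hi r) fun hi' => force (Nat.add k (nat_lit 2)) fun k' => ih k' hi'))) l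

/-- Test the number of odd coordinates and continue if it is eight. -/
noncomputable def mid (cs fs : List ℕ) (k lo hi : ℕ) : Bool :=
  force (pc lo) fun p => force (Nat.add k p) fun n =>
    bOr (Nat.ble (nat_lit 12) n) (bAnd (bOr (Nat.beq n (nat_lit 0)) (Nat.ble (nat_lit 8) n)) (dfsC p lo fs cs k hi))

/-- Choose the odd coordinates of the left half. -/
noncomputable def dfsA (l : List (ℕ × ℕ)) : List ℕ → List ℕ → ℕ → ℕ → ℕ → Bool :=
  List.rec (fun cs fs k lo hi => mid cs fs k lo hi)
    (fun r _ ih cs fs k lo hi => bAnd (ih (r.1 :: cs) fs k lo hi)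
      (bOr (Nat.ble (nat_lit 6) k) (force (Nat.xor lo r.1) fun lo' =>
        force (Nat.xor (Nat.xor hi r.2) (Nat.land lo r.1)) fun hi' =>
        force (Nat.add k (nat_lit 1)) fun k' => ih cs (r.1 :: fs) k' lo' hi'))) l

/-- The rows of the right half, packed as (low bits, high bits). -/
def rowsN : List (ℕ × ℕ) :=
  [(65534, 0), (30881, 48152), (61761, 30770), (57987, 61540), (50439, 57546), (35343, 49558),
   (5151, 33582), (10301, 1630), (20601, 3260), (41201, 6520), (16867, 13040), (33733, 26080),
   (1931, 52160), (3861, 38786), (7721, 12038), (15441, 24076)]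
set_option maxRecDepth 100000 in
theorem search_ok : dfsA rowsN [] [] 0 0 0 = true := by decide +kernel

theorem bAnd_eq (a b : Bool) : bAnd a b = (a && b) := by cases a <;> rfl
theorem bOr_eq (a b : Bool) : bOr a b = (a || b) := by cases a <;> rfl

theorem byteCount_eq : ∀ m < 256, byteCount m = ∑ j : Fin 8, if Nat.testBit m j then 1 else 0 := by
  decide +kernel

theorem pc_eq (n : ℕ) : pc n = ∑ j : Fin 16, if Nat.testBit n j then 1 else 0 := by
  have h1 : pc n = byteCount (n % 2 ^ 8) + byteCount ((n >>> 8) % 2 ^ 8) := by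
    rw [← Nat.and_two_pow_sub_one_eq_mod, ← Nat.and_two_pow_sub_one_eq_mod]; rfl
  rw [h1, byteCount_eq (n % 2 ^ 8) (Nat.mod_lt _ (by norm_num)),
    byteCount_eq ((n >>> 8) % 2 ^ 8) (Nat.mod_lt _ (by norm_num))]
  change _ = ∑ j : Fin (8 + 8), if Nat.testBit n j then 1 else 0
  rw [Fin.sum_univ_add]
  congr 1
  · refine Finset.sum_congr rfl fun j _ => ?_
    rw [Nat.testBit_mod_two_pow, Fin.val_castAdd]
    simp [j.isLt]
  · refine Finset.sum_congr rfl fun j _ => ?_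
    rw [Nat.testBit_mod_two_pow, Nat.testBit_shiftRight, Fin.val_natAdd]
    simp [j.isLt]

theorem leaf_iff (s lo hi : ℕ) : leaf s lo hi = true ↔
    (s + 2 * pc ((hi ||| lo) ^^^ lo) = 0 ∨ 14 ≤ s + 2 * pc ((hi ||| lo) ^^^ lo)) := by
  unfold leaf
  rw [force_eq, force_eq, bOr_eq, Bool.or_eq_true, Nat.beq_eq, Nat.ble_eq]
  exact Iff.rfl

theorem dfsF_nil (s lo hi : ℕ) : dfsF s lo [] hi = leaf s lo hi := rfl

theorem dfsF_cons (s lo r : ℕ) (l : List ℕ) (hi : ℕ) : dfsF s lo (r :: l) hi = true ↔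
    (dfsF s lo l hi = true ∧ dfsF s lo l (hi ^^^ r) = true) := by
  have : dfsF s lo (r :: l) hi = bAnd (dfsF s lo l hi) (force (hi ^^^ r) (dfsF s lo l)) := rfl
  rw [this, force_eq, bAnd_eq, Bool.and_eq_true]

theorem dfsC_nil (p lo : ℕ) (fs : List ℕ) (k hi : ℕ) :
    dfsC p lo fs [] k hi = dfsF (k + p) lo fs hi := by
  have : dfsC p lo fs [] k hi = force (k + p) fun s => dfsF s lo fs hi := rfl
  rw [this, force_eq]

theorem dfsC_cons (p lo : ℕ) (fs : List ℕ) (r : ℕ) (l : List ℕ) (k hi : ℕ) :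
    dfsC p lo fs (r :: l) k hi = true ↔
    (dfsC p lo fs l k hi = true ∧ (5 ≤ k ∨ dfsC p lo fs l (k + 2) (hi ^^^ r) = true)) := by
  have : dfsC p lo fs (r :: l) k hi = bAnd (dfsC p lo fs l k hi) (bOr (Nat.ble 5 k)
    (force (hi ^^^ r) fun hi' => force (k + 2) fun k' => dfsC p lo fs l k' hi')) := rfl
  rw [this, force_eq, force_eq, bAnd_eq, Bool.and_eq_true, bOr_eq, Bool.or_eq_true, Nat.ble_eq]

theorem mid_iff (cs fs : List ℕ) (k lo hi : ℕ) : mid cs fs k lo hi = true ↔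
    (12 ≤ k + pc lo ∨ ((k + pc lo = 0 ∨ 8 ≤ k + pc lo) ∧ dfsC (pc lo) lo fs cs k hi = true)) := by
  have : mid cs fs k lo hi = force (pc lo) fun p => force (k + p) fun n =>
    bOr (Nat.ble 12 n) (bAnd (bOr (Nat.beq n 0) (Nat.ble 8 n)) (dfsC p lo fs cs k hi)) := rfl
  rw [this, force_eq, force_eq, bOr_eq, bAnd_eq, bOr_eq, Bool.or_eq_true, Bool.and_eq_true,
    Bool.or_eq_true, Nat.ble_eq, Nat.ble_eq, Nat.beq_eq]

theorem dfsA_nil (cs fs : List ℕ) (k lo hi : ℕ) : dfsA [] cs fs k lo hi = mid cs fs k lo hi := rfl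

theorem dfsA_cons (r : ℕ × ℕ) (rs : List (ℕ × ℕ)) (cs fs : List ℕ) (k lo hi : ℕ) :
    dfsA (r :: rs) cs fs k lo hi = true ↔
    (dfsA rs (r.1 :: cs) fs k lo hi = true ∧ (6 ≤ k ∨
      dfsA rs cs (r.1 :: fs) (k + 1) (lo ^^^ r.1) ((hi ^^^ r.2) ^^^ (lo &&& r.1)) = true)) := by
  have : dfsA (r :: rs) cs fs k lo hi = bAnd (dfsA rs (r.1 :: cs) fs k lo hi)
      (bOr (Nat.ble 6 k) (force (lo ^^^ r.1) fun lo' =>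
        force ((hi ^^^ r.2) ^^^ (lo &&& r.1)) fun hi' =>
        force (k + 1) fun k' => dfsA rs cs (r.1 :: fs) k' lo' hi')) := rfl
  rw [this, force_eq, force_eq, force_eq, bAnd_eq, Bool.and_eq_true, bOr_eq, Bool.or_eq_true,
    Nat.ble_eq]

open Z4Note

/-- A bit as an element of `ZMod 4`. -/
def bit (n j : ℕ) : ZMod 4 := if Nat.testBit n j then 1 else 0

/-- The vector packed in a pair of numbers. -/
def vec (lo hi : ℕ) : Fin 16 → ZMod 4 := fun j => bit lo j + 2 * bit hi j

/-- Number of odd coordinates. -/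
def oddWt {ι : Type*} [Fintype ι] (x : ι → ZMod 4) : ℕ := ∑ i, (x i).val % 2

theorem vec_add (lo hi l h : ℕ) :
    vec (lo ^^^ l) ((hi ^^^ h) ^^^ (lo &&& l)) = vec lo hi + vec l h := by
  funext j
  simp only [vec, bit, Pi.add_apply, Nat.testBit_xor, Nat.testBit_and]
  cases lo.testBit j <;> cases hi.testBit j <;> cases l.testBit j <;> cases h.testBit j <;> decide

theorem vec_add_two (lo hi l : ℕ) : vec lo (hi ^^^ l) = vec lo hi + (2 : ZMod 4) • vec l 0 := by
  funext j
  simp only [vec, bit, Pi.add_apply, Pi.smul_apply, Nat.testBit_xor, Nat.zero_testBit]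
  cases lo.testBit j <;> cases hi.testBit j <;> cases l.testBit j <;> decide

theorem two_smul_vec (l h : ℕ) : (2 : ZMod 4) • vec l h = (2 : ZMod 4) • vec l 0 := by
  funext j
  simp only [vec, bit, Pi.smul_apply, Nat.zero_testBit]
  cases h.testBit j <;> cases l.testBit j <;> decide

theorem pc_lo (lo hi : ℕ) : pc lo = oddWt (vec lo hi) := by
  rw [pc_eq]
  refine Finset.sum_congr rfl fun j _ => ?_
  simp only [vec, bit]
  cases lo.testBit j <;> cases hi.testBit j <;> decide

theorem pc_lee (lo hi : ℕ) : pc lo + 2 * pc ((hi ||| lo) ^^^ lo) = leeWt (vec lo hi) := by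
  rw [pc_eq, pc_eq, Finset.mul_sum, ← Finset.sum_add_distrib]
  refine Finset.sum_congr rfl fun j _ => ?_
  simp only [vec, bit, Nat.testBit_xor, Nat.testBit_or]
  cases lo.testBit j <;> cases hi.testBit j <;> decide

/-- Number of selected entries. -/
def cnt (c : List (Bool × ℕ)) : ℕ := (c.map fun x => if x.1 then 1 else 0).sum

/-- Twice the sum of the selected rows. -/
def tot (c : List (Bool × ℕ)) : Fin 16 → ZMod 4 :=
  (c.map fun x => if x.1 then (2 : ZMod 4) • vec x.2 0 else 0).sum

/-- Zero or at least 14. -/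
def Ok (n : ℕ) : Prop := n = 0 ∨ 14 ≤ n

theorem dfsF_sound (k lo : ℕ) (f : List (Bool × ℕ)) : ∀ hi : ℕ,
    dfsF (k + pc lo) lo (f.map Prod.snd) hi = true → Ok (k + leeWt (vec lo hi + tot f)) := by
  induction f with
  | nil =>
    intro hi h
    rw [List.map_nil, dfsF_nil, leaf_iff, add_assoc, pc_lee] at h
    simpa [tot, Ok] using h
  | cons x f ih =>
    intro hi h
    rw [List.map_cons, dfsF_cons] at h
    obtain ⟨b, r⟩ := x
    cases b with
    | false => simpa [tot] using ih hi h.1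
    | true =>
      have := ih _ h.2
      rw [vec_add_two] at this
      simpa [tot, add_assoc] using this

theorem dfsC_sound (lo : ℕ) (f c : List (Bool × ℕ)) : ∀ k hi : ℕ,
    dfsC (pc lo) lo (f.map Prod.snd) (c.map Prod.snd) k hi = true → k + 2 * cnt c ≤ 6 →
    Ok (k + 2 * cnt c + leeWt (vec lo hi + tot f + tot c)) := by
  induction c with
  | nil =>
    intro k hi h _
    rw [List.map_nil, dfsC_nil] at h
    simpa [tot, cnt] using dfsF_sound _ _ _ _ h
  | cons x c ih =>
    intro k hi h hk
    rw [List.map_cons, dfsC_cons] at h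
    obtain ⟨b, r⟩ := x
    cases b with
    | false =>
      have := ih k hi h.1 (by simpa [cnt] using hk)
      simpa [tot, cnt] using this
    | true =>
      have hc : cnt ((true, r) :: c) = 1 + cnt c := by simp [cnt]
      have ht : tot ((true, r) :: c) = (2 : ZMod 4) • vec r 0 + tot c := by simp [tot]
      rw [hc] at hk
      have := ih _ _ (h.2.resolve_left (by omega)) (by omega)
      rw [vec_add_two] at this
      rw [hc, ht]
      convert this using 2
      · omega
      · congr 1; abel

/-- Number of odd coefficients. -/
def n1 (rs : List (Bool × Bool × (ℕ × ℕ))) : ℕ := (rs.map fun x => if x.1 then 1 else 0).sum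

/-- Number of coefficients equal to two. -/
def n2 (rs : List (Bool × Bool × (ℕ × ℕ))) : ℕ :=
  (rs.map fun x => if !x.1 && x.2.1 then 1 else 0).sum

/-- Linear combination of the rows. -/
def lin (rs : List (Bool × Bool × (ℕ × ℕ))) : Fin 16 → ZMod 4 :=
  (rs.map fun x => ((if x.1 then 1 else 0) + (if x.2.1 then 2 else 0) : ZMod 4) •
    vec x.2.2.1 x.2.2.2).sum

theorem oddWt_congr (X Y : Fin 16 → ZMod 4) (h : (2 : ZMod 4) • X = (2 : ZMod 4) • Y) :
    oddWt X = oddWt Y := by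
  refine Finset.sum_congr rfl fun j _ => ?_
  have h := congrFun h j
  simp only [Pi.smul_apply] at h
  revert h
  generalize X j = a
  generalize Y j = b
  revert a b
  decide

theorem two_two {X : Fin 16 → ZMod 4} : (2 : ZMod 4) • (2 : ZMod 4) • X = 0 := by
  rw [smul_smul]
  have : (2 * 2 : ZMod 4) = 0 := by decide
  rw [this, zero_smul]

theorem two_tot (c : List (Bool × ℕ)) : (2 : ZMod 4) • tot c = 0 := by
  induction c with
  | nil => simp [tot]
  | cons x c ih =>
    obtain ⟨b, r⟩ := x
    have : tot ((b, r) :: c) = (if b then (2 : ZMod 4) • vec r 0 else 0) + tot c := by simp [tot]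
    rw [this, smul_add, ih]
    cases b <;> simp [two_two]

theorem dfsA_sound (rs : List (Bool × Bool × (ℕ × ℕ))) : ∀ (c f : List (Bool × ℕ)) (k lo hi : ℕ),
    dfsA (rs.map fun x => x.2.2) (c.map Prod.snd) (f.map Prod.snd) k lo hi = true →
    k + 2 * cnt c + n1 rs + 2 * n2 rs ≤ 6 →
    let X := vec lo hi + tot f + tot c + lin rs
    (k + n1 rs + oddWt X = 0 ∨ 8 ≤ k + n1 rs + oddWt X) ∧
    (12 ≤ k + n1 rs + oddWt X ∨ Ok (k + 2 * cnt c + n1 rs + 2 * n2 rs + leeWt X)) := by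
  induction rs with
  | nil =>
    intro c f k lo hi h hk X
    rw [List.map_nil, dfsA_nil, mid_iff] at h
    have hX : X = vec lo hi + tot f + tot c := by simp [X, lin]
    have hp : pc lo = oddWt X := by
      rw [pc_lo lo hi]
      apply oddWt_congr
      rw [hX, smul_add, smul_add, two_tot, two_tot]; simp
    simp only [n1, n2, List.map_nil, List.sum_nil, add_zero, mul_zero] at hk ⊢
    rw [← hp]
    rcases h with h | ⟨h1, h2⟩
    · exact ⟨Or.inr (by omega), Or.inl h⟩
    · refine ⟨h1, Or.inr ?_⟩
      rw [hX]
      exact dfsC_sound lo f c k hi h2 hk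
  | cons x rs ih =>
    intro c f k lo hi h hk X
    rw [List.map_cons, dfsA_cons] at h
    obtain ⟨a, b, l, hh⟩ := x
    have hn1 : n1 ((a, b, l, hh) :: rs) = (if a then 1 else 0) + n1 rs := by simp [n1]
    have hn2 : n2 ((a, b, l, hh) :: rs) = (if !a && b then 1 else 0) + n2 rs := by simp [n2]
    have hl : lin ((a, b, l, hh) :: rs) =
      ((if a then 1 else 0) + (if b then 2 else 0) : ZMod 4) • vec l hh + lin rs := by simp [lin]
    have hc : cnt ((b, l) :: c) = (if b then 1 else 0) + cnt c := by simp [cnt]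
    have ht : ∀ g, tot ((b, l) :: g) = (if b then (2 : ZMod 4) • vec l 0 else 0) + tot g := by
      intro g; simp [tot]
    rw [hn1, hn2] at hk ⊢
    cases a with
    | false =>
      have := ih ((b, l) :: c) f k lo hi h.1 (by
        rw [hc]; cases b <;> simp at hk ⊢ <;> omega)
      have hX : X = vec lo hi + tot f + tot ((b, l) :: c) + lin rs := by
        simp only [X]; rw [hl, ht]
        cases b
        · simp
        · simp [two_smul_vec l hh]; abel
      rw [hX]
      rw [hc] at this
      cases b <;> simp at this ⊢
      · exact this
      · refine ⟨this.1, ?_⟩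
        convert this.2 using 3
        ring
    | true =>
      have hk6 : ¬ 6 ≤ k := by simp at hk; omega
      have := ih c ((b, l) :: f) (k + 1) _ _ (h.2.resolve_left hk6) (by
        simp at hk; omega)
      rw [vec_add] at this
      have hX : X = vec lo hi + vec l hh + tot ((b, l) :: f) + tot c + lin rs := by
        simp only [X]; rw [hl, ht]
        cases b
        · simp; abel
        · simp [add_smul, two_smul_vec l hh]; abel
      rw [hX]
      simp only [if_true, Bool.not_true, Bool.false_and, Bool.false_eq_true, if_false, zero_add]
      have e1 : k + (1 + n1 rs) = k + 1 + n1 rs := by ring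
      have e2 : k + 2 * cnt c + (1 + n1 rs) = k + 1 + 2 * cnt c + n1 rs := by ring
      rw [e1, e2]
      exact this

/-- Row `i` in packed form. -/
def rowN (i : Fin 16) : ℕ × ℕ := rowsN.get i

/-- Low bit of a residue modulo four. -/
def loB (a : ZMod 4) : Bool := decide (a.val % 2 = 1)

/-- High bit of a residue modulo four. -/
def hiB (a : ZMod 4) : Bool := decide (2 ≤ a.val)

theorem loB_odd : ∀ a : ZMod 4, (if loB a then 1 else 0) = a.val % 2 := by decide

theorem loB_lee : ∀ a : ZMod 4,
    (if loB a then 1 else 0) + 2 * (if !loB a && hiB a then 1 else 0) = leeVal a := by decide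

theorem loB_val : ∀ a : ZMod 4,
    ((if loB a then 1 else 0) + (if hiB a then 2 else 0) : ZMod 4) = a := by decide

theorem search_sound (u : Fin 16 → ZMod 4) (hu : leeWt u ≤ 6) :
    let X := ∑ i, u i • vec (rowN i).1 (rowN i).2
    (oddWt u + oddWt X = 0 ∨ 8 ≤ oddWt u + oddWt X) ∧
    (12 ≤ oddWt u + oddWt X ∨ Ok (leeWt u + leeWt X)) := by
  intro X
  let g : Fin 16 → Bool × Bool × (ℕ × ℕ) := fun i =>
    (loB (u i), hiB (u i), rowN i)
  let rs := (List.finRange 16).map g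
  have hrs : (rs.map fun x => x.2.2) = rowsN := by
    simp only [rs, List.map_map]
    change (List.finRange 16).map rowN = rowsN
    decide +kernel
  have h1 : n1 rs = oddWt u := by
    simp only [rs, n1, List.map_map, oddWt]
    rw [← Fin.sum_univ_def]
    refine Finset.sum_congr rfl fun j _ => ?_
    exact loB_odd (u j)
  have h2 : n1 rs + 2 * n2 rs = leeWt u := by
    simp only [rs, n1, n2, List.map_map, leeWt]
    rw [← Fin.sum_univ_def, ← Fin.sum_univ_def, Finset.mul_sum, ← Finset.sum_add_distrib]
    refine Finset.sum_congr rfl fun j _ => ?_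
    exact loB_lee (u j)
  have h3 : lin rs = X := by
    simp only [rs, lin, List.map_map, X]
    rw [← Fin.sum_univ_def]
    refine Finset.sum_congr rfl fun j _ => ?_
    simp only [Function.comp, g]
    rw [loB_val]
  have h0 : vec 0 0 = 0 := by
    funext j; simp [vec, bit]
  have := dfsA_sound rs [] [] 0 0 0 (by rw [hrs]; exact search_ok) (by simp [cnt]; omega)
  simp only [cnt, tot, List.map_nil, List.sum_nil, h0, h3, zero_add, mul_zero, add_zero, h2] at this
  rw [h1] at this
  exact this

end Z4Search

namespace Z4Final

open Z4Note Z4Search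

/-- The first row of the circulant. -/
abbrev r15 : Fin 15 → ZMod 4 := ![0,0,2,2,1,0,1,0,0,2,3,3,3,1,2]

/-- The right half of the generator matrix. -/
def B : Fin 16 → Fin 16 → ZMod 4 := bdcB 0 1 1 r15

/-- The code. -/
abbrev D : Submodule (ZMod 4) ((Fin 16 ⊕ Fin 16) → ZMod 4) := bdcCode 0 1 1 r15

/-- The coordinate permutation that transposes `B`. -/
def P (i : Fin 16) : Fin 16 := if i = 0 then 0 else ⟨(16 - i.val) % 16, Nat.mod_lt _ (by norm_num)⟩

theorem P_P : ∀ i, P (P i) = i := by decide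

/-- The permutation `P` as an equivalence. -/
def Pe : Fin 16 ≃ Fin 16 := ⟨P, P, P_P, P_P⟩

theorem B_P : ∀ i j, B (P i) (P j) = B j i := by decide +kernel

theorem B_row : ∀ i j, vec (rowN i).1 (rowN i).2 j = B i j := by decide +kernel

theorem B_orth : ∀ i k, ∑ j, B i j * B k j = if i = k then -1 else 0 := by decide +kernel

theorem B_orth' : ∀ i k, ∑ j, B j i * B j k = if i = k then -1 else 0 := by decide +kernel

theorem mem_D (x : (Fin 16 ⊕ Fin 16) → ZMod 4) :
    x ∈ D ↔ ∀ j, x (Sum.inr j) = ∑ i, x (Sum.inl i) * B i j := by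
  unfold D bdcCode
  rw [Submodule.mem_span_range_iff_exists_fun]
  have hr : ∀ i j, bdcRow 0 1 1 r15 i (Sum.inr j) = B i j := fun i j => rfl
  have hl : ∀ i j, bdcRow 0 1 1 r15 i (Sum.inl j) = if j = i then 1 else 0 := fun i j => rfl
  constructor
  · rintro ⟨c, rfl⟩ j
    simp [Finset.sum_apply, hr, hl]
  · intro h
    refine ⟨fun i => x (Sum.inl i), ?_⟩
    funext s
    rcases s with j | j
    · simp [Finset.sum_apply, hl]
    · simp [Finset.sum_apply, hr, h]

theorem row_mem (i : Fin 16) : bdcRow 0 1 1 r15 i ∈ D :=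
  Submodule.subset_span ⟨i, rfl⟩

theorem rows_orth : ∀ i k, ∑ s, bdcRow 0 1 1 r15 i s * bdcRow 0 1 1 r15 k s = 0 := by
  intro i k
  have hr : ∀ i j, bdcRow 0 1 1 r15 i (Sum.inr j) = B i j := fun i j => rfl
  have hl : ∀ i j, bdcRow 0 1 1 r15 i (Sum.inl j) = if j = i then 1 else 0 := fun i j => rfl
  rw [Fintype.sum_sum_type]
  have hb : ∑ x : Fin (15 + 1), B i x * B k x = if i = k then -1 else 0 := B_orth i k
  simp only [hr, hl]
  rw [hb]
  by_cases h : i = k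
  · simp [h]
  · simp [h, Ne.symm h]

theorem D_orth (x y : (Fin 16 ⊕ Fin 16) → ZMod 4) (hx : x ∈ D) (hy : y ∈ D) :
    ∑ s, x s * y s = 0 := by
  induction hx using Submodule.span_induction with
  | mem x h =>
    obtain ⟨i, rfl⟩ := h
    induction hy using Submodule.span_induction with
    | mem y h => obtain ⟨k, rfl⟩ := h; exact rows_orth i k
    | zero => simp
    | add y z _ _ h1 h2 => simp [mul_add, Finset.sum_add_distrib, h1, h2]
    | smul c y _ h =>
      simp only [Pi.smul_apply, smul_eq_mul, mul_left_comm _ c]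
      rw [← Finset.mul_sum, h, mul_zero]
  | zero => simp
  | add y z _ _ h1 h2 => simp [add_mul, Finset.sum_add_distrib, h1, h2]
  | smul c y _ h =>
    simp only [Pi.smul_apply, smul_eq_mul, mul_assoc]
    rw [← Finset.mul_sum, h, mul_zero]

theorem left_eq (x : (Fin 16 ⊕ Fin 16) → ZMod 4)
    (h : ∀ y ∈ D, ∑ s, x s * y s = 0) (i : Fin 16) :
    x (Sum.inl i) = - ∑ j, x (Sum.inr j) * B i j := by
  have hr : ∀ i j, bdcRow 0 1 1 r15 i (Sum.inr j) = B i j := fun i j => rfl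
  have hl : ∀ i j, bdcRow 0 1 1 r15 i (Sum.inl j) = if j = i then 1 else 0 := fun i j => rfl
  have := h _ (row_mem i)
  rw [Fintype.sum_sum_type] at this
  simp only [hr, hl, mul_ite, mul_one, mul_zero, Finset.sum_ite_eq', Finset.mem_univ, if_true]
    at this
  exact eq_neg_of_add_eq_zero_left this

theorem selfDual : SelfDualZ4 D := by
  apply Set.Subset.antisymm
  · intro x hx y hy
    exact D_orth x y hx hy
  · intro x hx
    have hl := left_eq x hx
    change x ∈ D
    rw [mem_D]
    intro j
    simp only [hl, neg_mul, Finset.sum_neg_distrib, Finset.sum_mul]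
    rw [Finset.sum_comm]
    simp only [mul_assoc, ← Finset.mul_sum, B_orth']
    simp

/-- The squared value, modulo eight. -/
def q (a : ZMod 4) : ZMod 8 := ((leeVal a ^ 2 : ℕ) : ZMod 8)

/-- Multiplication by two from `ZMod 4` to `ZMod 8`. -/
def dbl : ZMod 4 →+ ZMod 8 where
  toFun a := ((2 * a.val : ℕ) : ZMod 8)
  map_zero' := by decide
  map_add' := by decide

theorem q_add : ∀ a b : ZMod 4, q (a + b) = q a + q b + dbl (a * b) := by decide

theorem q_mul : ∀ a b : ZMod 4, q (a * b) = q a * q b := by decide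

theorem eucWt_cast {ι : Type*} [Fintype ι] (x : ι → ZMod 4) :
    ((eucWt x : ℕ) : ZMod 8) = ∑ i, q (x i) := by
  simp only [eucWt, q, Nat.cast_sum]

theorem row_q : ∀ i, ∑ s, q (bdcRow 0 1 1 r15 i s) = 0 := by decide +kernel

theorem typeII : TypeII (D : Set ((Fin 16 ⊕ Fin 16) → ZMod 4)) := by
  intro x hx
  rw [← ZMod.natCast_eq_zero_iff, eucWt_cast]
  change x ∈ D at hx
  induction hx using Submodule.span_induction with
  | mem x h => obtain ⟨i, rfl⟩ := h; exact row_q i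
  | zero => decide +kernel
  | add y z hy hz h1 h2 =>
    simp only [Pi.add_apply, q_add, Finset.sum_add_distrib, h1, h2, ← map_sum]
    rw [D_orth y z hy hz, map_zero]; simp
  | smul c y _ h =>
    simp only [Pi.smul_apply, smul_eq_mul, q_mul]
    rw [← Finset.mul_sum, h, mul_zero]

/-- Number of coordinates equal to two. -/
def twoWt {ι : Type*} [Fintype ι] (x : ι → ZMod 4) : ℕ := ∑ i, if x i = 2 then 1 else 0

theorem leeVal_eq : ∀ a : ZMod 4, leeVal a = a.val % 2 + 2 * (if a = 2 then 1 else 0) := by decide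

theorem leeVal_sq : ∀ a : ZMod 4, leeVal a ^ 2 = a.val % 2 + 4 * (if a = 2 then 1 else 0) := by
  decide

theorem lee_eq {ι : Type*} [Fintype ι] (x : ι → ZMod 4) :
    leeWt x = oddWt x + 2 * twoWt x := by
  simp only [leeWt, oddWt, twoWt, leeVal_eq, Finset.sum_add_distrib, Finset.mul_sum]

theorem euc_eq {ι : Type*} [Fintype ι] (x : ι → ZMod 4) :
    eucWt x = oddWt x + 4 * twoWt x := by
  simp only [eucWt, oddWt, twoWt, leeVal_sq, Finset.sum_add_distrib, Finset.mul_sum]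

theorem cast_ne : ∀ a : ZMod 4,
    (if ZMod.castHom (by norm_num : (2:ℕ) ∣ 4) (ZMod 2) a ≠ 0 then 1 else 0) = a.val % 2 := by
  decide

theorem hWt_res {ι : Type*} [Fintype ι] (x : ι → ZMod 4) : hWt (res2 x) = oddWt x := by
  unfold hWt oddWt
  rw [Finset.card_filter]
  exact Finset.sum_congr rfl fun i _ => cast_ne (x i)

theorem doublyEven : DoublyEven (residue (D : Set ((Fin 16 ⊕ Fin 16) → ZMod 4))) := by
  rintro _ ⟨x, hx, rfl⟩
  rw [hWt_res]
  have := typeII x hx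
  rw [euc_eq] at this
  omega

theorem two_mul_eq : ∀ a : ZMod 4,
    ZMod.castHom (by norm_num : (2:ℕ) ∣ 4) (ZMod 2) a = 0 → 2 * a = 0 := by decide

theorem cast_eq_of_two : ∀ a b : ZMod 4, 2 * a = 2 * b →
    ZMod.castHom (by norm_num : (2:ℕ) ∣ 4) (ZMod 2) a =
    ZMod.castHom (by norm_num : (2:ℕ) ∣ 4) (ZMod 2) b := by decide

theorem cast_lift : ∀ a : ZMod 2,
    ZMod.castHom (by norm_num : (2:ℕ) ∣ 4) (ZMod 2) ((a.val : ℕ) : ZMod 4) = a := by decide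

theorem res_selfDual : residue (D : Set ((Fin 16 ⊕ Fin 16) → ZMod 4)) =
    dual2 (residue (D : Set ((Fin 16 ⊕ Fin 16) → ZMod 4))) := by
  apply Set.Subset.antisymm
  · rintro _ ⟨x, hx, rfl⟩ _ ⟨y, hy, rfl⟩
    simp only [res2, ← map_mul, ← map_sum]
    rw [D_orth x y hx hy, map_zero]
  · intro y hy
    let z : (Fin 16 ⊕ Fin 16) → ZMod 4 := fun s => (((y s).val : ℕ) : ZMod 4)
    have hz : res2 z = y := funext fun s => cast_lift (y s)
    have h2 : (fun s => 2 * z s) ∈ D := by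
      have : (fun s => 2 * z s) ∈ dualZ4 (D : Set ((Fin 16 ⊕ Fin 16) → ZMod 4)) := by
        intro c hc
        simp only [mul_assoc, ← Finset.mul_sum]
        apply two_mul_eq
        rw [map_sum]
        have := hy (res2 c) ⟨c, hc, rfl⟩
        rw [← hz] at this
        simpa only [res2, map_mul] using this
      have hs : (D : Set ((Fin 16 ⊕ Fin 16) → ZMod 4)) = dualZ4 _ := selfDual
      rw [← hs] at this
      exact this
    rw [mem_D] at h2
    refine ⟨Sum.elim (fun i => z (Sum.inl i)) (fun j => ∑ i, z (Sum.inl i) * B i j), ?_, ?_⟩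
    · change _ ∈ D
      rw [mem_D]; intro j; rfl
    · rw [← hz]
      funext s
      apply cast_eq_of_two
      rcases s with j | j
      · rfl
      · rw [h2 j]
        simp only [Sum.elim_inr, Finset.mul_sum, mul_assoc]

/-- The image of a codeword under the symmetry exchanging both halves. -/
def swp (x : (Fin 16 ⊕ Fin 16) → ZMod 4) : (Fin 16 ⊕ Fin 16) → ZMod 4 :=
  Sum.elim (fun i => x (Sum.inr (P i))) (fun j => - x (Sum.inl (P j)))

theorem swp_mem (x : (Fin 16 ⊕ Fin 16) → ZMod 4) (hx : x ∈ D) : swp x ∈ D := by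
  rw [mem_D]
  intro j
  simp only [swp, Sum.elim_inr, Sum.elim_inl]
  rw [left_eq x (fun y hy => D_orth x y hx hy), neg_neg]
  rw [← Equiv.sum_comp Pe]
  refine Finset.sum_congr rfl fun i _ => ?_
  change x (Sum.inr (P i)) * B (P j) (P i) = _
  rw [B_P]

theorem sum_swp (x : (Fin 16 ⊕ Fin 16) → ZMod 4) (f : ZMod 4 → ℕ) (hf : ∀ a, f (-a) = f a) :
    ∑ s, f (swp x s) = ∑ s, f (x s) := by
  have h1 : ∑ i, f (x (Sum.inl (P i))) = ∑ i, f (x (Sum.inl i)) :=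
    Equiv.sum_comp Pe fun i => f (x (Sum.inl i))
  have h2 : ∑ i, f (x (Sum.inr (P i))) = ∑ i, f (x (Sum.inr i)) :=
    Equiv.sum_comp Pe fun i => f (x (Sum.inr i))
  rw [Fintype.sum_sum_type, Fintype.sum_sum_type, add_comm]
  simp only [swp, Sum.elim_inr, Sum.elim_inl, hf]
  rw [h1, h2]

theorem lee_swp (x : (Fin 16 ⊕ Fin 16) → ZMod 4) : leeWt (swp x) = leeWt x :=
  sum_swp x leeVal (by decide)

theorem odd_swp (x : (Fin 16 ⊕ Fin 16) → ZMod 4) : oddWt (swp x) = oddWt x :=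
  sum_swp x (fun a => a.val % 2) (by decide)

/-- The left half. -/
def lft (x : (Fin 16 ⊕ Fin 16) → ZMod 4) : Fin 16 → ZMod 4 := fun i => x (Sum.inl i)

/-- The right half. -/
def rgt (x : (Fin 16 ⊕ Fin 16) → ZMod 4) : Fin 16 → ZMod 4 := fun i => x (Sum.inr i)

theorem lee_halves (x : (Fin 16 ⊕ Fin 16) → ZMod 4) : leeWt x = leeWt (lft x) + leeWt (rgt x) :=
  Fintype.sum_sum_type _

theorem odd_halves (x : (Fin 16 ⊕ Fin 16) → ZMod 4) : oddWt x = oddWt (lft x) + oddWt (rgt x) :=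
  Fintype.sum_sum_type _

theorem lft_swp (x : (Fin 16 ⊕ Fin 16) → ZMod 4) : leeWt (lft (swp x)) = leeWt (rgt x) :=
  Equiv.sum_comp Pe fun i => leeVal (x (Sum.inr i))

theorem odd_lft_swp (x : (Fin 16 ⊕ Fin 16) → ZMod 4) : oddWt (lft (swp x)) = oddWt (rgt x) :=
  Equiv.sum_comp Pe fun i => (x (Sum.inr i)).val % 2

theorem main_left (x : (Fin 16 ⊕ Fin 16) → ZMod 4) (hx : x ∈ D) (h : leeWt (lft x) ≤ 6) :
    (oddWt x = 0 ∨ 8 ≤ oddWt x) ∧ (12 ≤ oddWt x ∨ leeWt x = 0 ∨ 14 ≤ leeWt x) := by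
  have hX : ∑ i, lft x i • vec (rowN i).1 (rowN i).2 = rgt x := by
    funext j
    rw [Finset.sum_apply]
    simp only [Pi.smul_apply, smul_eq_mul, B_row]
    exact ((mem_D x).1 hx j).symm
  have := search_sound (lft x) h
  simp only [hX, ← lee_halves, ← odd_halves] at this
  exact this

theorem lee_bound (x : (Fin 16 ⊕ Fin 16) → ZMod 4) (hx : x ∈ D) : leeWt x = 0 ∨ 14 ≤ leeWt x := by
  by_contra hcon
  have h2 := typeII x hx
  rw [euc_eq] at h2
  have h3 := lee_eq x
  have h4 := lee_halves x
  by_cases h : leeWt (lft x) ≤ 6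
  · have := main_left x hx h
    omega
  · have := main_left (swp x) (swp_mem x hx) (by rw [lft_swp]; omega)
    rw [lee_swp, odd_swp] at this
    omega

/-- Reduction of coordinates to zero and one. -/
def red (x : (Fin 16 ⊕ Fin 16) → ZMod 4) : (Fin 16 ⊕ Fin 16) → ZMod 4 :=
  Sum.elim (fun i => (((x (Sum.inl i)).val % 2 : ℕ) : ZMod 4))
    (fun j => ∑ i, (((x (Sum.inl i)).val % 2 : ℕ) : ZMod 4) * B i j)

theorem red_mem (x : (Fin 16 ⊕ Fin 16) → ZMod 4) : red x ∈ D := by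
  rw [mem_D]; intro j; rfl

theorem two_mod : ∀ a : ZMod 4, 2 * ((a.val % 2 : ℕ) : ZMod 4) = 2 * a := by decide

theorem odd_of_two : ∀ a b : ZMod 4, 2 * a = 2 * b → a.val % 2 = b.val % 2 := by decide

theorem lee_mod : ∀ a : ZMod 4, leeVal ((a.val % 2 : ℕ) : ZMod 4) = a.val % 2 := by decide

theorem odd_red (x : (Fin 16 ⊕ Fin 16) → ZMod 4) (hx : x ∈ D) : oddWt (red x) = oddWt x := by
  refine Finset.sum_congr rfl fun s _ => ?_
  apply odd_of_two
  rcases s with i | j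
  · exact two_mod _
  · rw [(mem_D x).1 hx j]
    simp only [red, Sum.elim_inr, Finset.mul_sum, ← mul_assoc, two_mod]

theorem lee_red (x : (Fin 16 ⊕ Fin 16) → ZMod 4) : leeWt (lft (red x)) = oddWt (lft x) :=
  Finset.sum_congr rfl fun _ _ => lee_mod _

theorem odd_bound (x : (Fin 16 ⊕ Fin 16) → ZMod 4) (hx : x ∈ D) : oddWt x = 0 ∨ 8 ≤ oddWt x := by
  by_contra hcon
  have h4 := odd_halves x
  by_cases h : oddWt (lft x) ≤ 6
  · have := (main_left (red x) (red_mem x) (by rw [lee_red]; exact h)).1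
    rw [odd_red x hx] at this
    omega
  · have := (main_left (red (swp x)) (red_mem _) (by rw [lee_red, odd_lft_swp]; omega)).1
    rw [odd_red _ (swp_mem x hx), odd_swp] at this
    omega

theorem leeVal_zero : ∀ a : ZMod 4, leeVal a = 0 → a = 0 := by decide

theorem eq_zero_of_lee {ι : Type*} [Fintype ι] (x : ι → ZMod 4) (h : leeWt x = 0) : x = 0 := by
  unfold leeWt at h
  rw [Finset.sum_eq_zero_iff] at h
  funext i
  exact leeVal_zero _ (h i (Finset.mem_univ i))

theorem eq_zero_of_hWt {ι : Type*} [Fintype ι] (x : ι → ZMod 2) (h : hWt x = 0) : x = 0 := by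
  unfold hWt at h
  rw [Finset.card_eq_zero, Finset.filter_eq_empty_iff] at h
  funext i
  exact not_not.1 (h (Finset.mem_univ i))

/-- A codeword of Lee weight 14. -/
def wit : (Fin 16 ⊕ Fin 16) → ZMod 4 :=
  bdcRow 0 1 1 r15 0 + (2 : ZMod 4) • bdcRow 0 1 1 r15 1 + (3 : ZMod 4) • bdcRow 0 1 1 r15 2

theorem wit_mem : wit ∈ D :=
  D.add_mem (D.add_mem (row_mem 0) (D.smul_mem _ (row_mem 1))) (D.smul_mem _ (row_mem 2))

theorem wit_lee : leeWt wit = 14 := by decide +kernel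

theorem row_odd : oddWt (bdcRow 0 1 1 r15 1) = 8 := by decide +kernel

theorem minLee_D : minLee (D : Set ((Fin 16 ⊕ Fin 16) → ZMod 4)) = 14 := by
  apply le_antisymm
  · refine Nat.sInf_le ⟨wit, wit_mem, ?_, wit_lee⟩
    intro h
    have := wit_lee
    rw [h, lee_eq] at this
    simp [oddWt, twoWt] at this
    exact absurd this (by decide)
  · apply le_csInf
    · exact ⟨_, wit, wit_mem, by
        intro h
        have := wit_lee
        rw [h] at this
        revert this
        decide +kernel, rfl⟩
    · rintro d ⟨x, hx, hne, rfl⟩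
      exact (lee_bound x hx).resolve_left fun h => hne (eq_zero_of_lee x h)

theorem minHam_D : minHam (residue (D : Set ((Fin 16 ⊕ Fin 16) → ZMod 4))) = 8 := by
  have h8 : hWt (res2 (bdcRow 0 1 1 r15 1)) = 8 := by rw [hWt_res]; exact row_odd
  have hmem : 8 ∈ {d | ∃ x ∈ residue (D : Set ((Fin 16 ⊕ Fin 16) → ZMod 4)),
      x ≠ 0 ∧ hWt x = d} := by
    refine ⟨_, ⟨_, row_mem 1, rfl⟩, ?_, h8⟩
    intro h
    rw [h] at h8
    simp [hWt] at h8
  apply le_antisymm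
  · exact Nat.sInf_le hmem
  · apply le_csInf ⟨8, hmem⟩
    rintro d ⟨_, ⟨x, hx, rfl⟩, hne, rfl⟩
    have := odd_bound x hx
    rw [← hWt_res] at this
    exact this.resolve_left fun h => hne (eq_zero_of_hWt _ h)

end Z4Final

open Z4Note in
/-- the bordered double circulant code `D_{32}` is a self-dual Type II
`ZMod 4`-code with minimum Lee weight 14 whose residue code is a binary extremal
doubly even self-dual code of length 32 (minimum Hamming weight 8). -/
theorem bdc_code_D32_properties :
    let D : Submodule (ZMod 4) ((Fin 16 ⊕ Fin 16) → ZMod 4) :=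
      bdcCode 0 1 1 ![0,0,2,2,1,0,1,0,0,2,3,3,3,1,2]
    SelfDualZ4 D ∧ TypeII (D : Set ((Fin 16 ⊕ Fin 16) → ZMod 4)) ∧
    minLee (D : Set ((Fin 16 ⊕ Fin 16) → ZMod 4)) = 14 ∧
    residue (D : Set ((Fin 16 ⊕ Fin 16) → ZMod 4)) =
      dual2 (residue (D : Set ((Fin 16 ⊕ Fin 16) → ZMod 4))) ∧
    DoublyEven (residue (D : Set ((Fin 16 ⊕ Fin 16) → ZMod 4))) ∧
    minHam (residue (D : Set ((Fin 16 ⊕ Fin 16) → ZMod 4))) = 8 := by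
  intro D
  exact ⟨Z4Final.selfDual, Z4Final.typeII, Z4Final.minLee_D, Z4Final.res_selfDual,
    Z4Final.doublyEven, Z4Final.minHam_D⟩
end

section
/- The bordered double circulant Z4-code of length 56 determined by (α,β,γ) = (0,1,1) and circulant first row (0,0,2,2,0,2,0,0,2,0,0,2,3,1,2,0,1,0,1,0,1,1,1,1,0,1,1) is a self-dual Type I Z4-code with minimum Lee weight 18 and minimum Euclidean weight 20. -/
open Finset

namespace Z4Aux

/-- Table of the bit counts of the numbers below 1024, four binary digits for each. -/
def pcTable : ℕ := 6918916311981443928565592902681834130793586977065688554571260455495671510881316912566261590568443176183179236068933516438544684036190431668140765764142684063263509230420170633010760292129818138208869190232018345978129010773914241965539774137174548957030758665345505174381056141660578066659981211165312951096892038752265503856712928643390738489326272949211114144587505749843569472557119603572199556719037304224074174401768641615550588105125472600014978452762626179567331137092452993552997529761671914247949093840337010451064101827775418427464880034631722387793621207978243163139955664585956956632317168116297016619783326705843377855224961924465176237080426488286582469349409233591847736136983466914506026774677442746006810345132331528444164352116601543099360630135258791584359148709837245552145552730574345921655553638152175221680320159535991435773272543519580920454574349466657638354914781723219153350787205817118804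41120768020105460112867763827221107738879880274733212236587000790378039248184331915894421225801759436105632157507993068486763007017993245207393048855564932976062782041797226457386880135454852809196006524511772020756940829358804825465443494801516909017007020981467251299052172145039322024649071247711858340863347335440

/-- Bit count of a number below 2^28. -/
def pc (x : ℕ) : ℕ :=
  Nat.add (Nat.mod (Nat.shiftRight pcTable (Nat.mul 4 (Nat.mod x 1024))) 16)
    (Nat.add (Nat.mod (Nat.shiftRight pcTable (Nat.mul 4 (Nat.mod (Nat.shiftRight x 10) 1024))) 16)
      (Nat.mod (Nat.shiftRight pcTable (Nat.mul 4 (Nat.shiftRight x 20))) 16))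

/-- Conditional. -/
abbrev bsel {α : Type} (b : Bool) (t f : α) : α := @Bool.rec (fun _ => α) f t b

/-- The bit planes (entries mod 2, entries div 2) of the first row of `B`. -/
def row0 : ℕ × ℕ := (268435454, 0)

/-- The bit planes of the other rows of `B`. -/
def rows : List (ℕ × ℕ) :=
  [(233463809, 45656), (198492163, 91312), (128548871, 182624), (257097741, 365248), (245760027, 730496), (223084599, 1460992), (177733743, 2921984), (87032031, 5843968), (174064061, 11687936), (79692667, 23375872), (159385333, 46751744), (50335211, 93503488), (100670421, 187006976), (201340841, 105578498), (134246227, 211156996), (56999, 153878538), (113997, 39321622), (227993, 78643244), (455985, 157286488), (911969, 46137522), (1823937, 92275044), (3647873, 184550088), (7295745, 100664722), (14591489, 201329444), (29182977, 134223434), (58365953, 11414), (116731905, 22828)]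

/-- Sum of rows modulo 4, in bit planes. -/
def planes (l : List (ℕ × ℕ)) : ℕ × ℕ :=
  @List.rec (ℕ × ℕ) (fun _ => ℕ × ℕ) (0, 0)
    (fun r _ ih => (Nat.xor ih.1 r.1, Nat.xor (Nat.xor ih.2 r.2) (Nat.land ih.1 r.1))) l

/-- The mod 2 parts of the rows in `l`, packed in blocks of 32 bits in front of `t`. -/
def packRows (l : List (ℕ × ℕ)) (t : ℕ) : ℕ :=
  @List.rec (ℕ × ℕ) (fun _ => ℕ) t (fun r _ ih => Nat.add r.1 (Nat.mul 4294967296 ih)) l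

/-- The number with 80 blocks equal to one. -/
def ones : ℕ := 100885566877157507971486363319358064896941648146415877720165821785867092604547592689781354753820950661127783772947707432839541589715607722216683913357821838213565865168517218197272012605487244335091924251987816416353698787292378079387373711524103646973306585924939938895865179943692271757099364759745467883366467202344210523923138349470757283943083247634669822955290702793213642022448582037518713062333017496327617777274260176227667331486152587804387599416895145218042566440181293562078027356874431924405742430713317194034725283952855127681092124800703700619394801636637077313186351292198974076535971521162528996589697241658520795419544400337674416408387541836024248268480070673208334667092177961988111421758082957728642301947599038251472130019852137440324091905

/-- Reduce the blocks of `W` after the first one modulo the first one. -/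
def redStep (W : ℕ) : ℕ :=
  Nat.xor (Nat.shiftRight W 32) (Nat.mul (Nat.mod W 4294967296)
    (Nat.land (Nat.div (Nat.shiftRight W 32) (Nat.gcd (Nat.mod W 4294967296) 4294967296)) ones))

/-- `n` steps of elimination. -/
def elim (n W : ℕ) : ℕ :=
  @Nat.rec (fun _ => ℕ → ℕ) (fun W => W) (fun _ ih W => ih (redStep W)) n W

/-- The first `n` blocks of `W`. -/
def unpack (n : ℕ) : ℕ → List ℕ :=
  @Nat.rec (fun _ => ℕ → List ℕ) (fun _ => [])
    (fun _ ih W => Nat.mod W 4294967296 :: ih (Nat.shiftRight W 32)) n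

/-- `v` is not a member of `G`. -/
def notIn (v : ℕ) (G : List ℕ) : Bool :=
  @List.rec ℕ (fun _ => Bool) true (fun g _ ih => bsel (Nat.beq v g) false ih) G

/-- The set of residues of the members of `G`, as a bit mask. -/
def hsh (G : List ℕ) : ℕ :=
  @List.rec ℕ (fun _ => ℕ) 0 (fun g _ ih => Nat.lor ih (Nat.shiftLeft 1 (Nat.mod g 4093))) G

/-- No `g` in `K` has `v xor g` in `G`; `h` is the hash of `G`. -/
def chk (G : List ℕ) (h v : ℕ) (K : List ℕ) : Bool :=
  @List.rec ℕ (fun _ => Bool) true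
    (fun g _ ih => bsel (bsel (Nat.beq (Nat.mod (Nat.shiftRight h (Nat.mod (Nat.xor v g) 4093)) 2) 0) true
      (notIn (Nat.xor v g) G)) ih false) K

/-- The mod 2 parts of the rows, then the unit vectors, packed in blocks of 32 bits. -/
def gensP : ℕ := 8721722239385728864127682790214054667551457844320950724227504138743694965447249098878620232952130066125158827917197983112200104604112360284286501539874165958506766521911135844840891932571113866480050340571834715286148135942477654776327941054148225515016254974170377104111486424958091224642384090389540172573262231275578546762682169737925294383657392164141143506532568184002260116698131042990455075449654259762609483023613429410240453477572332745222913508691674148901185107280257758191188391785561695163536661815283476990103197167636185086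

/-- The check for a given set of odd coordinates and the bit planes of the sum of rows. -/
def full' (l : List (ℕ × ℕ)) (n L H : ℕ) : Bool :=
  bsel (Nat.ble 17 (Nat.add n (pc L))) true
    (bsel (Nat.beq (Nat.add n (pc L)) 16)
      (bsel (Nat.beq (elim n (Nat.land (packRows l H) (Nat.mul ones (Nat.xor 268435455 L)))) 0) false true)
      (bsel (Nat.beq (Nat.add n (pc L)) 12)
        (@List.rec ℕ (fun _ => Bool) false (fun v G _ => chk (0 :: G) (hsh (0 :: G)) v (0 :: G))
          (unpack 57 (elim n (Nat.land (packRows l (Nat.add H (Nat.mul 4294967296 gensP)))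
            (Nat.mul ones (Nat.xor 268435455 L))))))
        false))

/-- The check for a given set of odd coordinates. -/
def full (n : ℕ) (l : List (ℕ × ℕ)) : Bool := full' l n (planes l).1 (planes l).2

/-- Check at a leaf of the search. -/
def leaf (k mask acc : ℕ) (l : List (ℕ × ℕ)) : Bool :=
  bsel (Nat.beq (Nat.mod (Nat.shiftRight mask (pc acc)) 2) 0) true
    (bsel (full k l) (full (Nat.succ k) (row0 :: l)) false)

/-- The search. -/
def go (k mask : ℕ) (rs : List (ℕ × ℕ)) : ℕ → ℕ → ℕ → List (ℕ × ℕ) → Bool :=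
  @List.rec (ℕ × ℕ) (fun _ => ℕ → ℕ → ℕ → List (ℕ × ℕ) → Bool) (fun _ _ _ _ => true)
    (fun r _ ih c s acc ch =>
      bsel (bsel (Nat.beq c 1) (leaf k mask (Nat.xor acc r.1) (r :: ch))
          (ih (Nat.sub c 1) (Nat.sub (Nat.add s 27) k) (Nat.xor acc r.1) (r :: ch)))
        (bsel (Nat.ble k s) (ih c (Nat.sub s k) acc ch) true) false) rs

def mask1 : ℕ := 536870911
theorem go1 : go 1 mask1 rows 1 0 0 [] = true := by decide +kernel

def mask2 : ℕ := 536870911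
theorem go2 : go 2 mask2 rows 2 0 0 [] = true := by decide +kernel

def mask3 : ℕ := 536854527
theorem go3 : go 3 mask3 rows 3 0 0 [] = true := by decide +kernel

def mask4 : ℕ := 536813567
theorem go4 : go 4 mask4 rows 4 0 0 [] = true := by decide +kernel

def mask5 : ℕ := 536743935
theorem go5 : go 5 mask5 rows 5 0 0 [] = true := by decide +kernel

def mask6 : ℕ := 536610815
theorem go6 : go 6 mask6 rows 6 0 0 [] = true := by decide +kernel

def mask7 : ℕ := 536347647
theorem go7 : go 7 mask7 rows 7 0 0 [] = true := by decide +kernel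

def mask8 : ℕ := 535822847
theorem go8 : go 8 mask8 rows 8 0 0 [] = true := by decide +kernel


/-! ### Bit planes -/

/-- The element of `ZMod 4` at position `j` of a pair of bit planes. -/
def val (p : ℕ × ℕ) (j : ℕ) : ZMod 4 :=
  (if p.1.testBit j then 1 else 0) + (if p.2.testBit j then 2 else 0)

theorem planes_nil : planes [] = (0, 0) := rfl

theorem planes_cons (r : ℕ × ℕ) (l : List (ℕ × ℕ)) :
    planes (r :: l) = ((planes l).1 ^^^ r.1,
      (planes l).2 ^^^ r.2 ^^^ ((planes l).1 &&& r.1)) := rfl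

theorem planes_val (l : List (ℕ × ℕ)) (j : ℕ) :
    val (planes l) j = (l.map (fun r => val r j)).sum := by
  induction l with
  | nil => simp [planes_nil, val]
  | cons r l ih =>
    rw [List.map_cons, List.sum_cons, ← ih, planes_cons]
    simp only [val, Nat.testBit_xor, Nat.testBit_and]
    generalize (planes l).1.testBit j = a
    generalize (planes l).2.testBit j = b
    generalize r.1.testBit j = c
    generalize r.2.testBit j = d
    revert a b c d
    decide

theorem planes_lt (l : List (ℕ × ℕ)) (h : ∀ r ∈ l, r.1 < 2 ^ 28 ∧ r.2 < 2 ^ 28) :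
    (planes l).1 < 2 ^ 28 ∧ (planes l).2 < 2 ^ 28 := by
  induction l with
  | nil => simp [planes_nil]
  | cons r l ih =>
    have h1 := ih (fun r hr => h r (List.mem_cons_of_mem _ hr))
    have h2 := h r List.mem_cons_self
    rw [planes_cons]
    exact ⟨Nat.xor_lt_two_pow h1.1 h2.1,
      Nat.xor_lt_two_pow (Nat.xor_lt_two_pow h1.2 h2.2) (Nat.and_lt_two_pow _ h2.1)⟩

/-! ### Bit counts -/

theorem pc_table : ∀ y < 1024, (pcTable >>> (4 * y)) % 16 =
    ((List.range 10).map fun j => (y.testBit j).toNat).sum := by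
  decide +kernel

theorem pc_eq (x : ℕ) (hx : x < 2 ^ 28) : pc x = ∑ j : Fin 28, (x.testBit j).toNat := by
  have h1 := pc_table (x % 1024) (Nat.mod_lt _ (by norm_num))
  have h2 := pc_table ((x >>> 10) % 1024) (Nat.mod_lt _ (by norm_num))
  have h3 := pc_table (x >>> 20) (by rw [Nat.shiftRight_eq_div_pow]; omega)
  have h0 : pc x = (pcTable >>> (4 * (x % 1024))) % 16 +
    ((pcTable >>> (4 * ((x >>> 10) % 1024))) % 16 + (pcTable >>> (4 * (x >>> 20))) % 16) := rfl
  rw [h0, h1, h2, h3]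
  have e : (1024 : ℕ) = 2 ^ 10 := by norm_num
  have z8 : x.testBit 28 = false := Nat.testBit_lt_two_pow (lt_of_lt_of_le hx (by norm_num))
  have z9 : x.testBit 29 = false := Nat.testBit_lt_two_pow (lt_of_lt_of_le hx (by norm_num))
  rw [e]
  rw [Fin.sum_univ_eq_sum_range (fun j => (x.testBit j).toNat) 28]
  simp only [Nat.testBit_mod_two_pow, Nat.testBit_shiftRight, List.range, List.range.loop,
    Finset.sum_range_succ, Finset.sum_range_zero, List.map_cons, List.map_nil, List.sum_cons,
    List.sum_nil, Nat.reduceAdd, Nat.reduceLT, decide_true, Bool.true_and, z8, z9,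
    Bool.toNat_false]
  ring

/-! ### Xor of lists -/

/-- Xor of a list. -/
def xl (l : List ℕ) : ℕ := l.foldr (fun a b => a ^^^ b) 0

theorem xl_nil : xl [] = 0 := rfl

theorem xl_cons (a : ℕ) (l : List ℕ) : xl (a :: l) = a ^^^ xl l := rfl

/-- Twice a bit, as an element of `ZMod 4`. -/
def e2 (b : Bool) : ZMod 4 := if b then 2 else 0

theorem e2_xor (a b : Bool) : e2 (a ^^ b) = e2 a + e2 b := by revert a b; decide

theorem e2_inj (a b : Bool) (h : e2 a = e2 b) : a = b := by revert a b; decide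

theorem xl_e2 (l : List ℕ) (j : ℕ) :
    e2 ((xl l).testBit j) = (l.map fun u => e2 (u.testBit j)).sum := by
  induction l with
  | nil => simp [xl_nil, e2]
  | cons a l ih => rw [xl_cons, Nat.testBit_xor, e2_xor, ih, List.map_cons, List.sum_cons]

/-- Xor-linear functions. -/
def XLin (f : ℕ → ℕ) : Prop := f 0 = 0 ∧ ∀ a b, f (a ^^^ b) = f a ^^^ f b

theorem XLin.xl {f : ℕ → ℕ} (hf : XLin f) (l : List ℕ) : f (xl l) = Z4Aux.xl (l.map f) := by
  induction l with
  | nil => exact hf.1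
  | cons a l ih => rw [xl_cons, hf.2, ih, List.map_cons, xl_cons]

/-! ### Packed lists -/

/-- Packing in blocks of 32 bits. -/
def pk (l : List ℕ) : ℕ := l.foldr (fun a b => a + 4294967296 * b) 0

theorem pk_nil : pk [] = 0 := rfl

theorem pk_cons (a : ℕ) (l : List ℕ) : pk (a :: l) = a + 4294967296 * pk l := rfl

theorem tb (a A i : ℕ) (ha : a < 4294967296) :
    (a + 4294967296 * A).testBit i = if i < 32 then a.testBit i else A.testBit (i - 32) := by
  have := Nat.testBit_two_pow_mul_add A (i := 32) (b := a) (by norm_num; exact ha) i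
  rw [show (2:ℕ)^32 = 4294967296 by norm_num, add_comm] at this
  exact this

theorem xor_blk (a b A B : ℕ) (ha : a < 4294967296) (hb : b < 4294967296) :
    (a + 4294967296 * A) ^^^ (b + 4294967296 * B) = (a ^^^ b) + 4294967296 * (A ^^^ B) := by
  have hab : a ^^^ b < 4294967296 := Nat.xor_lt_two_pow (n := 32) ha hb
  apply Nat.eq_of_testBit_eq
  intro i
  rw [Nat.testBit_xor, tb _ _ _ ha, tb _ _ _ hb, tb _ _ _ hab]
  split <;> rw [Nat.testBit_xor]

theorem and_blk (a b A B : ℕ) (ha : a < 4294967296) (hb : b < 4294967296) :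
    (a + 4294967296 * A) &&& (b + 4294967296 * B) = (a &&& b) + 4294967296 * (A &&& B) := by
  have hab : a &&& b < 4294967296 := Nat.and_lt_two_pow (n := 32) _ hb
  apply Nat.eq_of_testBit_eq
  intro i
  rw [Nat.testBit_and, tb _ _ _ ha, tb _ _ _ hb, tb _ _ _ hab]
  split <;> rw [Nat.testBit_and]

/-- Extraction of bit `p` of every block. -/
theorem bits_blk (a A O p : ℕ) (ha : a < 4294967296) (hp : p < 32) :
    ((a + 4294967296 * A) / 2 ^ p) &&& (1 + 4294967296 * O) =
      (a / 2 ^ p) % 2 + 4294967296 * ((A / 2 ^ p) &&& O) := by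
  have h2 : (a / 2 ^ p) % 2 < 4294967296 := lt_trans (Nat.mod_lt _ (by norm_num)) (by norm_num)
  apply Nat.eq_of_testBit_eq
  intro i
  rw [Nat.testBit_and, tb _ _ _ (by norm_num), tb _ _ _ h2, Nat.testBit_div_two_pow,
    tb _ _ _ ha]
  by_cases hi : i < 32
  · rw [if_pos hi, if_pos hi]
    rcases Nat.eq_zero_or_pos i with rfl | hi0
    · rw [zero_add, if_pos hp, Nat.testBit_zero, Nat.testBit_zero, Nat.testBit_eq_decide_div_mod_eq]
      simp
    · have h1 : (1 : ℕ).testBit i = false :=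
        Nat.testBit_lt_two_pow (Nat.one_lt_two_pow (by omega))
      have h3 : ((a / 2 ^ p) % 2).testBit i = false :=
        Nat.testBit_lt_two_pow (lt_of_lt_of_le (Nat.mod_lt _ (by norm_num))
          (by calc 2 = 2 ^ 1 := by norm_num
                _ ≤ 2 ^ i := Nat.pow_le_pow_right (by norm_num) hi0))
      rw [h1, h3, Bool.and_false]
  · rw [if_neg hi, if_neg hi, if_neg (by omega), Nat.testBit_and, Nat.testBit_div_two_pow]
    congr 2
    omega

/-- Reduction of `u` modulo `v`. -/
def rd (v u : ℕ) : ℕ := u ^^^ (v * ((u / Nat.gcd v 4294967296) % 2))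

theorem gcd_pow (v : ℕ) (hv : v < 4294967296) (h0 : v ≠ 0) :
    ∃ p < 32, Nat.gcd v 4294967296 = 2 ^ p ∧ (v / 2 ^ p) % 2 = 1 := by
  have hd : Nat.gcd v 4294967296 ∣ 2 ^ 32 := Nat.gcd_dvd_right v 4294967296
  obtain ⟨p, hp, hp'⟩ := (Nat.dvd_prime_pow Nat.prime_two).1 hd
  have hdv : 2 ^ p ∣ v := hp' ▸ Nat.gcd_dvd_left v 4294967296
  have hp32 : p < 32 := by
    rcases Nat.lt_or_ge p 32 with h | h
    · exact h
    · have h1 := Nat.le_of_dvd (Nat.pos_of_ne_zero h0) hdv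
      have h2 : 2 ^ 32 ≤ 2 ^ p := Nat.pow_le_pow_right (by norm_num) h
      have h3 : (2:ℕ) ^ 32 = 4294967296 := by norm_num
      omega
  refine ⟨p, hp32, hp', ?_⟩
  by_contra hne
  have he : 2 ∣ v / 2 ^ p := by omega
  have h1 : 2 ^ (p + 1) ∣ v := by
    rw [pow_succ]
    exact Nat.mul_dvd_of_dvd_div hdv he
  have h2 : 2 ^ (p + 1) ∣ 4294967296 :=
    (pow_dvd_pow 2 hp32 : 2 ^ (p + 1) ∣ 2 ^ 32)
  have h3 : 2 ^ (p + 1) ∣ 2 ^ p := hp' ▸ Nat.dvd_gcd h1 h2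
  have := Nat.le_of_dvd (by positivity) h3
  have : 2 ^ p < 2 ^ (p + 1) := Nat.pow_lt_pow_right (by norm_num) (by omega)
  omega

theorem rd_zero_left (u : ℕ) : rd 0 u = u := by simp [rd]

theorem rd_self (v : ℕ) (hv : v < 4294967296) : rd v v = 0 := by
  by_cases h0 : v = 0
  · subst h0; rfl
  · obtain ⟨p, -, hp, h⟩ := gcd_pow v hv h0
    rw [rd, hp, h, mul_one, Nat.xor_self]

theorem rd_lt (v u : ℕ) (hv : v < 4294967296) (hu : u < 4294967296) : rd v u < 4294967296 := by
  unfold rd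
  refine Nat.xor_lt_two_pow (n := 32) hu ?_
  rcases Nat.mod_two_eq_zero_or_one (u / Nat.gcd v 4294967296) with h | h <;> rw [h] <;> omega

theorem rd_lin (v : ℕ) (hv : v < 4294967296) : XLin (rd v) := by
  refine ⟨by simp [rd], fun a b => ?_⟩
  by_cases h0 : v = 0
  · subst h0; simp [rd_zero_left]
  · obtain ⟨p, -, hp, -⟩ := gcd_pow v hv h0
    simp only [rd, hp]
    have key : ∀ u : ℕ, v * ((u / 2 ^ p) % 2) = if u.testBit p then v else 0 := by
      intro u
      rw [Nat.testBit_eq_decide_div_mod_eq]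
      rcases Nat.mod_two_eq_zero_or_one (u / 2 ^ p) with h | h <;> simp [h]
    rw [key, key, key, Nat.testBit_xor]
    apply Nat.eq_of_testBit_eq
    intro i
    cases a.testBit p <;> cases b.testBit p <;> simp [Nat.testBit_xor] <;>
      cases a.testBit i <;> cases b.testBit i <;> simp

theorem bits_pk (p : ℕ) (hp : p < 32) (l : List ℕ) (n : ℕ) (hn : l.length ≤ n)
    (hl : ∀ u ∈ l, u < 4294967296) :
    (pk l / 2 ^ p) &&& pk (List.replicate n 1) = pk (l.map fun u => (u / 2 ^ p) % 2) := by
  induction l generalizing n with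
  | nil => simp [pk_nil]
  | cons a l ih =>
    obtain ⟨n, rfl⟩ : ∃ m, n = m + 1 := ⟨n - 1, by simp at hn; omega⟩
    rw [List.replicate_succ, pk_cons, pk_cons, bits_blk _ _ _ _ (hl a List.mem_cons_self) hp,
      ih n (by simpa using hn) (fun u hu => hl u (List.mem_cons_of_mem _ hu)), List.map_cons,
      pk_cons]

theorem xor_pk (f : ℕ → ℕ) (l : List ℕ) (hl : ∀ u ∈ l, u < 4294967296)
    (hf : ∀ u ∈ l, f u < 4294967296) :
    pk l ^^^ pk (l.map f) = pk (l.map fun u => u ^^^ f u) := by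
  induction l with
  | nil => simp [pk_nil]
  | cons a l ih =>
    rw [List.map_cons, List.map_cons, pk_cons, pk_cons, pk_cons,
      xor_blk _ _ _ _ (hl a List.mem_cons_self) (hf a List.mem_cons_self),
      ih (fun u hu => hl u (List.mem_cons_of_mem _ hu))
        (fun u hu => hf u (List.mem_cons_of_mem _ hu))]

theorem mul_pk (v : ℕ) (l : List ℕ) : v * pk l = pk (l.map fun u => v * u) := by
  induction l with
  | nil => rfl
  | cons a l ih => rw [List.map_cons, pk_cons, pk_cons, ← ih]; ring

theorem ones_eq : ones = pk (List.replicate 80 1) := by decide +kernel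

theorem pk_div (a : ℕ) (l : List ℕ) (ha : a < 4294967296) : pk (a :: l) >>> 32 = pk l := by
  rw [pk_cons, Nat.shiftRight_eq_div_pow]; omega

theorem pk_mod (a : ℕ) (l : List ℕ) (ha : a < 4294967296) : pk (a :: l) % 4294967296 = a := by
  rw [pk_cons]; omega

theorem redStep_pk (v : ℕ) (ts : List ℕ) (hv : v < 4294967296) (hts : ∀ u ∈ ts, u < 4294967296)
    (hlen : ts.length ≤ 80) : redStep (pk (v :: ts)) = pk (ts.map (rd v)) := by
  have h0 : redStep (pk (v :: ts)) = (pk (v :: ts) >>> 32) ^^^ ((pk (v :: ts) % 4294967296) *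
    (((pk (v :: ts) >>> 32) / Nat.gcd (pk (v :: ts) % 4294967296) 4294967296) &&& ones)) := rfl
  rw [h0, pk_div _ _ hv, pk_mod _ _ hv]
  by_cases hz : v = 0
  · subst hz
    rw [zero_mul, Nat.xor_zero]
    congr 1
    symm
    conv_rhs => rw [← List.map_id ts]
    exact List.map_congr_left (fun u _ => rd_zero_left u)
  · obtain ⟨p, hp, hg, -⟩ := gcd_pow v hv hz
    rw [hg, ones_eq, bits_pk p hp ts 80 hlen hts, mul_pk, List.map_map, xor_pk _ _ hts]
    · congr 1
      refine List.map_congr_left fun u _ => ?_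
      rw [rd, hg]
      rfl
    · intro u _
      rcases Nat.mod_two_eq_zero_or_one (u / 2 ^ p) with h | h <;> simp [h, hv]

theorem elim_succ (n W : ℕ) : elim (n + 1) W = elim n (redStep W) := rfl

theorem elim_spec (vs : List ℕ) : ∀ ts : List ℕ, (∀ u ∈ vs, u < 4294967296) →
    (∀ u ∈ ts, u < 4294967296) → (vs ++ ts).length ≤ 80 →
    ∃ φ : ℕ → ℕ, XLin φ ∧ (∀ u < 4294967296, φ u < 4294967296) ∧ (∀ v ∈ vs, φ v = 0) ∧
      elim vs.length (pk (vs ++ ts)) = pk (ts.map φ) := by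
  induction hn : vs.length generalizing vs with
  | zero =>
    intro ts _ _ _
    obtain rfl := List.length_eq_zero_iff.1 hn
    exact ⟨id, ⟨rfl, fun _ _ => rfl⟩, fun u hu => hu, by simp, by simp [elim]⟩
  | succ n ih =>
    intro ts hvs hts hlen
    obtain ⟨v, vs, rfl⟩ := List.exists_cons_of_length_eq_add_one hn
    have hv := hvs v List.mem_cons_self
    have hvs' : ∀ u ∈ vs, u < 4294967296 := fun u hu => hvs u (List.mem_cons_of_mem _ hu)
    obtain ⟨φ, h1, h2, h3, h4⟩ := ih (vs.map (rd v)) (by simpa using hn) (ts.map (rd v))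
      (by
        intro u hu
        obtain ⟨w, hw, rfl⟩ := List.mem_map.1 hu
        exact rd_lt v w hv (hvs' w hw))
      (by
        intro u hu
        obtain ⟨w, hw, rfl⟩ := List.mem_map.1 hu
        exact rd_lt v w hv (hts w hw))
      (by simp at hlen ⊢; omega)
    refine ⟨fun u => φ (rd v u), ⟨?_, ?_⟩, ?_, ?_, ?_⟩
    · show φ (rd v 0) = 0
      rw [(rd_lin v hv).1, h1.1]
    · intro a b
      show φ (rd v (a ^^^ b)) = _
      rw [(rd_lin v hv).2, h1.2]
    · intro u hu
      exact h2 _ (rd_lt v u hv hu)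
    · intro u hu
      rcases List.mem_cons.1 hu with rfl | hu
      · show φ (rd u u) = 0
        rw [rd_self u hv, h1.1]
      · exact h3 _ (List.mem_map_of_mem hu)
    · rw [elim_succ, List.cons_append, redStep_pk v _ hv, List.map_append, h4, List.map_map]
      · rfl
      · intro u hu
        rcases List.mem_append.1 hu with hu | hu
        · exact hvs' u hu
        · exact hts u hu
      · simp at hlen ⊢; omega

theorem unpack_pk (l : List ℕ) (hl : ∀ u ∈ l, u < 4294967296) : unpack l.length (pk l) = l := by
  induction l with
  | nil => rfl
  | cons a l ih =>
    have h0 : unpack (a :: l).length (pk (a :: l)) =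
      (pk (a :: l) % 4294967296) :: unpack l.length (pk (a :: l) >>> 32) := rfl
    rw [h0, pk_mod _ _ (hl a List.mem_cons_self), pk_div _ _ (hl a List.mem_cons_self),
      ih (fun u hu => hl u (List.mem_cons_of_mem _ hu))]

theorem and_pk (M : ℕ) (hM : M < 4294967296) (l : List ℕ) (n : ℕ) (hn : l.length ≤ n)
    (hl : ∀ u ∈ l, u < 4294967296) :
    pk l &&& pk (List.replicate n M) = pk (l.map fun u => u &&& M) := by
  induction l generalizing n with
  | nil => simp [pk_nil]
  | cons a l ih =>
    obtain ⟨n, rfl⟩ : ∃ m, n = m + 1 := ⟨n - 1, by simp at hn; omega⟩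
    rw [List.replicate_succ, pk_cons, pk_cons, and_blk _ _ _ _ (hl a List.mem_cons_self) hM,
      ih n (by simpa using hn) (fun u hu => hl u (List.mem_cons_of_mem _ hu)), List.map_cons,
      pk_cons]

theorem ones_mul (M : ℕ) : ones * M = pk (List.replicate 80 M) := by
  rw [ones_eq, mul_comm, mul_pk, List.map_replicate, mul_one]

theorem packRows_pk (l : List (ℕ × ℕ)) (t : List ℕ) :
    packRows l (pk t) = pk (l.map Prod.fst ++ t) := by
  induction l with
  | nil => rfl
  | cons r l ih => rw [List.map_cons, List.cons_append, pk_cons, ← ih]; rfl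

/-! ### The pair test -/

theorem notIn_sound (v : ℕ) (G : List ℕ) (h : notIn v G = true) : v ∉ G := by
  induction G with
  | nil => simp
  | cons g G ih =>
    have h0 : notIn v (g :: G) = bsel (Nat.beq v g) false (notIn v G) := rfl
    rw [h0] at h
    cases hb : Nat.beq v g with
    | true => rw [hb] at h; cases h
    | false =>
      rw [hb] at h
      have := Nat.ne_of_beq_eq_false hb
      simp only [List.mem_cons, not_or]
      exact ⟨this, ih h⟩

theorem hsh_sound (G : List ℕ) (g : ℕ) (hg : g ∈ G) : (hsh G).testBit (g % 4093) = true := by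
  induction G with
  | nil => simp at hg
  | cons a G ih =>
    have h0 : hsh (a :: G) = hsh G ||| (1 <<< (a % 4093)) := rfl
    rw [h0, Nat.testBit_or]
    rcases List.mem_cons.1 hg with rfl | hg
    · simp [Nat.one_shiftLeft]
    · rw [ih hg, Bool.true_or]

theorem chk_sound (G : List ℕ) (v : ℕ) (K : List ℕ) (h : chk G (hsh G) v K = true) :
    ∀ g ∈ K, v ^^^ g ∉ G := by
  induction K with
  | nil => simp
  | cons a K ih =>
    have h0 : chk G (hsh G) v (a :: K) =
      bsel (bsel (Nat.beq ((hsh G >>> ((v ^^^ a) % 4093)) % 2) 0) true (notIn (v ^^^ a) G))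
        (chk G (hsh G) v K) false := rfl
    rw [h0] at h
    cases h1 : bsel (Nat.beq ((hsh G >>> ((v ^^^ a) % 4093)) % 2) 0) true (notIn (v ^^^ a) G) with
    | false => rw [h1] at h; cases h
    | true =>
      rw [h1] at h
      intro g hg
      rcases List.mem_cons.1 hg with rfl | hg
      · cases h2 : Nat.beq ((hsh G >>> ((v ^^^ g) % 4093)) % 2) 0 with
        | false =>
          rw [h2] at h1
          exact notIn_sound _ _ h1
        | true =>
          intro hm
          have h3 := hsh_sound G _ hm
          have h4 := Nat.eq_of_beq_eq_true h2
          rw [Nat.testBit_eq_decide_div_mod_eq, ← Nat.shiftRight_eq_div_pow, h4] at h3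
          simp at h3
      · exact ih h g hg

/-! ### Soundness of the check for one set of odd coordinates -/

/-- All rows of `B`, as bit planes. -/
def allRows : List (ℕ × ℕ) := row0 :: rows

/-- The mod 2 parts of the rows, then the unit vectors. -/
def gensL : List ℕ := allRows.map Prod.fst ++ (List.range 28).map (fun j => 2 ^ j)

theorem gensP_eq : gensP = pk gensL := by decide +kernel

theorem gensL_lt : ∀ u ∈ gensL, u < 4294967296 := by decide +kernel

theorem gensL_length : gensL.length = 56 := by decide +kernel

theorem full_def (n : ℕ) (l : List (ℕ × ℕ)) : full n l =
    bsel (Nat.ble 17 (n + pc (planes l).1)) true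
    (bsel (Nat.beq (n + pc (planes l).1) 16)
      (bsel (Nat.beq (elim n (packRows l (planes l).2 &&&
        (ones * (268435455 ^^^ (planes l).1)))) 0) false true)
      (bsel (Nat.beq (n + pc (planes l).1) 12)
        (@List.rec ℕ (fun _ => Bool) false (fun v G _ => chk (0 :: G) (hsh (0 :: G)) v (0 :: G))
          (unpack 57 (elim n (packRows l ((planes l).2 + 4294967296 * gensP) &&&
            (ones * (268435455 ^^^ (planes l).1))))))
        false)) := rfl

theorem full_of_ge (n : ℕ) (l : List (ℕ × ℕ)) (h : 17 ≤ n + pc (planes l).1) :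
    full n l = true := by
  rw [full_def, Nat.ble_eq_true_of_le h]

/-- The elimination, applied to the masked rows. -/
theorem elim_masked (l : List (ℕ × ℕ)) (ts : List ℕ) (M : ℕ) (hM : M < 4294967296)
    (hl : ∀ r ∈ l, r.1 < 4294967296) (hts : ∀ u ∈ ts, u < 4294967296)
    (hlen : l.length + ts.length ≤ 80) :
    ∃ φ : ℕ → ℕ, XLin φ ∧ (∀ u < 4294967296, φ u < 4294967296) ∧
      (∀ v ∈ l.map (fun r => r.1 &&& M), φ v = 0) ∧
      elim l.length (packRows l (pk ts) &&& (ones * M)) =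
        pk ((ts.map fun u => u &&& M).map φ) := by
  have hand : ∀ u : ℕ, u &&& M < 4294967296 := fun u => Nat.and_lt_two_pow (n := 32) _ hM
  obtain ⟨φ, h1, h2, h3, h4⟩ := elim_spec (l.map (fun r => r.1 &&& M))
    (ts.map fun u => u &&& M)
    (by
      intro u hu
      obtain ⟨w, _, rfl⟩ := List.mem_map.1 hu
      exact hand _)
    (by
      intro u hu
      obtain ⟨w, _, rfl⟩ := List.mem_map.1 hu
      exact hand _)
    (by simpa using hlen)
  refine ⟨φ, h1, h2, h3, ?_⟩
  rw [packRows_pk, ones_mul, and_pk M hM _ 80 (by simpa using hlen), List.map_append,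
    List.map_map, ← h4, List.length_map]
  · rfl
  · intro u hu
    rcases List.mem_append.1 hu with hu | hu
    · obtain ⟨w, hw, rfl⟩ := List.mem_map.1 hu
      exact hl w hw
    · exact hts u hu

theorem xl_zero (l : List ℕ) (h : ∀ u ∈ l, u = 0) : xl l = 0 := by
  induction l with
  | nil => rfl
  | cons a l ih =>
    rw [xl_cons, h a List.mem_cons_self, ih (fun u hu => h u (List.mem_cons_of_mem _ hu)),
      Nat.xor_zero]

theorem full_sound (l : List (ℕ × ℕ)) (hl : ∀ r ∈ l, r.1 < 2 ^ 28 ∧ r.2 < 2 ^ 28)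
    (hlen : l.length ≤ 20) (h : full l.length l = true) :
    12 ≤ l.length + pc (planes l).1 ∧
    ∀ P K : List ℕ,
      (∀ u ∈ P, u ∈ l.map (fun r => r.1 &&& (268435455 ^^^ (planes l).1))) →
      (∀ u ∈ K, u ∈ gensL.map (fun u => u &&& (268435455 ^^^ (planes l).1))) →
      (planes l).2 &&& (268435455 ^^^ (planes l).1) = xl P ^^^ xl K →
      17 ≤ l.length + pc (planes l).1 + 2 * K.length := by
  have hpl := planes_lt l hl
  have hM : 268435455 ^^^ (planes l).1 < 4294967296 :=
    lt_trans (Nat.xor_lt_two_pow (n := 28) (by norm_num) hpl.1) (by norm_num)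
  have hl' : ∀ r ∈ l, r.1 < 4294967296 := fun r hr => lt_trans (hl r hr).1 (by norm_num)
  have hH : (planes l).2 < 4294967296 := lt_trans hpl.2 (by norm_num)
  rw [full_def] at h
  generalize hMdef : 268435455 ^^^ (planes l).1 = M at h hM ⊢
  generalize pc (planes l).1 = w at h ⊢
  generalize (planes l).2 = H at h hH ⊢
  cases h17 : Nat.ble 17 (l.length + w) with
  | true =>
    have := Nat.le_of_ble_eq_true h17
    exact ⟨by omega, fun P K _ _ _ => by omega⟩
  | false =>
    rw [h17] at h
    cases h16 : Nat.beq (l.length + w) 16 with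
    | true =>
      have hw := Nat.eq_of_beq_eq_true h16
      refine ⟨by omega, fun P K hP hK hx => ?_⟩
      rw [h16] at h
      obtain ⟨φ, hφ, -, hk, he⟩ := elim_masked l [H] M hM hl' (by simpa using hH)
        (by simp; omega)
      rw [show pk [H] = H by simp [pk_cons, pk_nil]] at he
      rw [he] at h
      rcases Nat.eq_zero_or_pos K.length with hK0 | hK0
      · exfalso
        obtain rfl := List.length_eq_zero_iff.1 hK0
        have hz : φ (H &&& M) = 0 := by
          rw [hx, xl_nil, Nat.xor_zero, hφ.xl]
          apply xl_zero
          intro u hu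
          obtain ⟨w, hw, rfl⟩ := List.mem_map.1 hu
          exact hk w (hP w hw)
        have : pk (List.map φ (List.map (fun u => u &&& M) [H])) = 0 := by
          simp [pk_cons, pk_nil, hz]
        rw [this] at h
        cases h
      · omega
    | false =>
      rw [h16] at h
      cases h12 : Nat.beq (l.length + w) 12 with
      | false => rw [h12] at h; cases h
      | true =>
        have hw := Nat.eq_of_beq_eq_true h12
        refine ⟨by omega, fun P K hP hK hx => ?_⟩
        rw [h12] at h
        obtain ⟨φ, hφ, hlt, hk, he⟩ := elim_masked l (H :: gensL) M hM hl'
          (by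
            intro u hu
            rcases List.mem_cons.1 hu with rfl | hu
            · exact hH
            · exact gensL_lt u hu)
          (by rw [List.length_cons, gensL_length]; omega)
        rw [pk_cons, ← gensP_eq] at he
        have hun := unpack_pk (((H :: gensL).map fun u => u &&& M).map φ) (by
          intro u hu
          obtain ⟨w, hw, rfl⟩ := List.mem_map.1 hu
          obtain ⟨w, hw, rfl⟩ := List.mem_map.1 hw
          exact hlt _ (Nat.and_lt_two_pow (n := 32) _ hM))
        rw [List.length_map, List.length_map, List.length_cons, gensL_length] at hun
        rw [he, hun] at h
        have h' := chk_sound (0 :: (gensL.map fun u => u &&& M).map φ) (φ (H &&& M)) _ h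
        have hz : φ (H &&& M) = xl (K.map φ) := by
          rw [hx, hφ.2, hφ.xl, hφ.xl, xl_zero (P.map φ), Nat.zero_xor]
          intro u hu
          obtain ⟨w, hw, rfl⟩ := List.mem_map.1 hu
          exact hk w (hP w hw)
        have hmem : ∀ u ∈ K, φ u ∈ (0 :: (gensL.map fun u => u &&& M).map φ) := fun u hu =>
          List.mem_cons_of_mem _ (List.mem_map_of_mem (hK u hu))
        have h0 : (0 : ℕ) ∈ (0 :: (gensL.map fun u => u &&& M).map φ) := List.mem_cons_self
        match K, hz, hmem with
        | [], hz, _ =>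
          exact absurd (by rw [hz]; simp [xl_nil]) (h' 0 h0)
        | [a], hz, hmem =>
          refine absurd ?_ (h' (φ a) (hmem a (by simp)))
          rw [hz]; simp [xl_cons, xl_nil]
        | [a, b], hz, hmem =>
          refine absurd ?_ (h' (φ a) (hmem a (by simp)))
          rw [hz]
          simp only [xl_cons, xl_nil, List.map_cons, List.map_nil, Nat.xor_zero]
          rw [Nat.xor_comm (φ a), Nat.xor_assoc, Nat.xor_self, Nat.xor_zero]
          exact hmem b (by simp)
        | a :: b :: c :: K, _, _ =>
          simp only [List.length_cons]; omega

/-! ### Soundness of the search -/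

/-- The requirement on the mask used at the leaves. -/
def MaskOK (k mask : ℕ) : Prop := ∀ w < 29, (mask >>> w) % 2 = 0 → 17 ≤ k + w ∧ w ≤ k + 11

theorem pc_le (x : ℕ) (hx : x < 2 ^ 28) : pc x < 29 := by
  rw [pc_eq x hx]
  have : ∑ j : Fin 28, (x.testBit j).toNat ≤ ∑ _j : Fin 28, 1 :=
    Finset.sum_le_sum fun j _ => Bool.toNat_le _
  simp at this
  omega

theorem row0_bits : ∀ j : Fin 28, j ≠ 0 → row0.1.testBit j = true := by decide

theorem row0_lt : row0.1 < 2 ^ 28 ∧ row0.2 < 2 ^ 28 := by decide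

theorem pc_row0 (x : ℕ) (hx : x < 2 ^ 28) : 27 ≤ pc x + pc (x ^^^ row0.1) := by
  rw [pc_eq x hx, pc_eq _ (Nat.xor_lt_two_pow hx row0_lt.1), ← Finset.sum_add_distrib]
  have h1 : (27 : ℕ) = ∑ j : Fin 28, if j ≠ 0 then 1 else 0 := by decide
  rw [h1]
  refine Finset.sum_le_sum fun j _ => ?_
  by_cases hj : j = 0
  · simp [hj]
  · rw [if_pos hj, Nat.testBit_xor, row0_bits j hj]
    cases x.testBit j <;> decide

theorem leaf_sound (k mask acc : ℕ) (l : List (ℕ × ℕ)) (hm : MaskOK k mask)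
    (hl : ∀ r ∈ l, r.1 < 2 ^ 28 ∧ r.2 < 2 ^ 28) (hacc : acc = (planes l).1)
    (h : leaf k mask acc l = true) : full k l = true ∧ full (k + 1) (row0 :: l) = true := by
  have hlt : acc < 2 ^ 28 := hacc ▸ (planes_lt l hl).1
  have h0 : leaf k mask acc l = bsel (Nat.beq ((mask >>> (pc acc)) % 2) 0) true
    (bsel (full k l) (full (k + 1) (row0 :: l)) false) := rfl
  rw [h0] at h
  cases hb : Nat.beq ((mask >>> (pc acc)) % 2) 0 with
  | true =>
    obtain ⟨h1, h2⟩ := hm (pc acc) (pc_le acc hlt) (Nat.eq_of_beq_eq_true hb)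
    refine ⟨full_of_ge _ _ (hacc ▸ h1), full_of_ge _ _ ?_⟩
    rw [planes_cons, ← hacc]
    have := pc_row0 acc hlt
    show 17 ≤ k + 1 + pc (acc ^^^ row0.1)
    omega
  | false =>
    rw [hb] at h
    cases hf : full k l with
    | false => rw [hf] at h; cases h
    | true => rw [hf] at h; exact ⟨rfl, h⟩

/-- The prefix condition. -/
def Good (k : ℕ) : ℕ → List Bool → Prop
  | _, [] => True
  | s, true :: bs => Good k (s + 27 - k) bs
  | s, false :: bs => k ≤ s ∧ Good k (s - k) bs

theorem go_sound {ι : Type} (R : ι → ℕ × ℕ) (hR : ∀ i, (R i).1 < 2 ^ 28 ∧ (R i).2 < 2 ^ 28)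
    (f : ι → Bool) (k mask : ℕ) (hm : MaskOK k mask) (is : List ι) :
    ∀ (c s acc : ℕ) (ch : List (ℕ × ℕ)), go k mask (is.map R) c s acc ch = true →
      1 ≤ c → (is.filter f).length = c → acc = (planes ch).1 →
      (∀ r ∈ ch, r.1 < 2 ^ 28 ∧ r.2 < 2 ^ 28) → Good k s (is.map f) →
      full k ((is.filter f).reverse.map R ++ ch) = true ∧
      full (k + 1) (row0 :: ((is.filter f).reverse.map R ++ ch)) = true := by
  induction is with
  | nil => intro c s acc ch _ hc hlen; simp at hlen; omega
  | cons i is ih =>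
    intro c s acc ch h hc hlen hacc hch hgood
    have h0 : go k mask ((i :: is).map R) c s acc ch =
      bsel (bsel (Nat.beq c 1) (leaf k mask (acc ^^^ (R i).1) (R i :: ch))
          (go k mask (is.map R) (c - 1) (s + 27 - k) (acc ^^^ (R i).1) (R i :: ch)))
        (bsel (Nat.ble k s) (go k mask (is.map R) c (s - k) acc ch) true) false := rfl
    rw [h0] at h
    have hch' : ∀ r ∈ R i :: ch, r.1 < 2 ^ 28 ∧ r.2 < 2 ^ 28 := by
      intro r hr
      rcases List.mem_cons.1 hr with rfl | hr
      · exact hR i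
      · exact hch r hr
    have hacc' : acc ^^^ (R i).1 = (planes (R i :: ch)).1 := by rw [planes_cons, hacc]
    cases hA : bsel (Nat.beq c 1) (leaf k mask (acc ^^^ (R i).1) (R i :: ch))
          (go k mask (is.map R) (c - 1) (s + 27 - k) (acc ^^^ (R i).1) (R i :: ch)) with
    | false => rw [hA] at h; cases h
    | true =>
      rw [hA] at h
      cases hf : f i with
      | true =>
        rw [List.filter_cons_of_pos hf] at hlen ⊢
        rw [List.length_cons] at hlen
        rw [List.map_cons, hf] at hgood
        simp only [Good] at hgood
        rw [List.reverse_cons, List.map_append, List.append_assoc]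
        cases hc1 : Nat.beq c 1 with
        | true =>
          rw [hc1] at hA
          have := Nat.eq_of_beq_eq_true hc1
          have hnil : is.filter f = [] := List.length_eq_zero_iff.1 (by omega)
          rw [hnil]
          exact leaf_sound k mask _ _ hm hch' hacc' hA
        | false =>
          rw [hc1] at hA
          have := Nat.ne_of_beq_eq_false hc1
          exact ih (c - 1) _ _ _ hA (by omega) (by omega) hacc' hch' hgood
      | false =>
        rw [List.filter_cons_of_neg (by simp [hf])] at hlen ⊢
        rw [List.map_cons, hf] at hgood
        simp only [Good] at hgood
        rw [Nat.ble_eq_true_of_le hgood.1] at h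
        exact ih c _ _ _ h hc hlen hacc hch hgood.2

/-! ### The cycle lemma -/

theorem good_of_prefix (k : ℕ) (hk : k ≤ 27) (bs : List Bool) : ∀ s : ℕ,
    (∀ j ≤ bs.length, k * j ≤ s + 27 * ((bs.take j).count true)) → Good k s bs := by
  induction bs with
  | nil => intro s _; trivial
  | cons b bs ih =>
    intro s h
    cases b with
    | true =>
      refine ih _ fun j hj => ?_
      have := h (j + 1) (by simpa using hj)
      simp only [List.take_succ_cons, List.count_cons_self] at this
      rw [mul_add] at this
      omega
    | false =>
      have h1 := h 1 (by simp)
      simp at h1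
      refine ⟨h1, ih _ fun j hj => ?_⟩
      have := h (j + 1) (by simpa using hj)
      simp only [List.take_succ_cons] at this
      rw [mul_add, List.count_cons_of_ne (by simp)] at this
      omega

theorem count_prefix (g : ℕ → Bool) (n j : ℕ) (hj : j ≤ n) :
    (((List.range n).map g).take j).count true = ∑ i ∈ Finset.range j, (g i).toNat := by
  rw [← List.map_take, List.take_range, min_eq_left hj]
  clear hj
  induction j with
  | zero => simp
  | succ j ih =>
    rw [List.range_succ, List.map_append, List.count_append, ih, Finset.sum_range_succ]
    cases hg : g j <;> simp [hg]

/-- Some rotation of a periodic 0-1 sequence satisfies the prefix condition. -/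
theorem cycle_lemma (g : ℕ → Bool) (k : ℕ) (hk : k ≤ 27) (hper : ∀ n, g (n + 27) = g n)
    (hsum : ∑ i ∈ Finset.range 27, (g i).toNat = k) :
    ∃ t < 27, Good k 0 ((List.range 27).map fun i => g (t + i)) := by
  let F : ℕ → ℤ := fun n => ∑ i ∈ Finset.range n, (27 * ((g i).toNat : ℤ) - k)
  have hF27 : F 27 = 0 := by
    simp only [F]
    rw [Finset.sum_sub_distrib, ← Finset.mul_sum, ← Nat.cast_sum, hsum]
    simp
  have hFadd : ∀ n j, F (n + j) = F n + ∑ i ∈ Finset.range j, (27 * ((g (n + i)).toNat : ℤ) - k) := by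
    intro n j
    simp only [F]
    rw [Finset.sum_range_add]
  have hFper : ∀ n, F (n + 27) = F n := by
    intro n
    rw [add_comm, hFadd 27 n, hF27, zero_add]
    simp only [F]
    refine Finset.sum_congr rfl fun i _ => ?_
    rw [add_comm 27 i, hper]
  obtain ⟨t, ht, hmin⟩ := Finset.exists_min_image (Finset.range 27) F ⟨0, by simp⟩
  have hall : ∀ n, F t ≤ F n := by
    intro n
    induction n using Nat.strong_induction_on with
    | _ n ih =>
      rcases Nat.lt_or_ge n 27 with h | h
      · exact hmin n (by simpa using h)
      · have := ih (n - 27) (by omega)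
        rwa [← hFper (n - 27), Nat.sub_add_cancel h] at this
  refine ⟨t, by simpa using ht, good_of_prefix k hk _ 0 fun j hj => ?_⟩
  rw [List.length_map, List.length_range] at hj
  rw [count_prefix (fun i => g (t + i)) 27 j hj]
  have h1 := hall (t + j)
  rw [hFadd t j, Finset.sum_sub_distrib, ← Finset.mul_sum] at h1
  simp only [Finset.sum_const, Finset.card_range, nsmul_eq_mul] at h1
  zify
  nlinarith

/-! ### Codewords -/

open Z4Note

/-- The first row of the circulant. -/
def rv : Fin 27 → ZMod 4 := ![0,0,2,2,0,2,0,0,2,0,0,2,3,1,2,0,1,0,1,0,1,1,1,1,0,1,1]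

/-- The matrix `B`. -/
def B : Fin 28 → Fin 28 → ZMod 4 := bdcB 0 1 1 rv

/-- The bit planes of the rows of `B`. -/
def R (i : Fin 28) : ℕ × ℕ := allRows.getD i (0, 0)

theorem R_lt : ∀ i, (R i).1 < 2 ^ 28 ∧ (R i).2 < 2 ^ 28 := by decide +kernel

theorem R_val : ∀ i j : Fin 28, val (R i) j = B i j := by decide +kernel

theorem rows_eq : rows = (List.finRange 27).map (fun i => R i.succ) := by decide +kernel

theorem R_mem : ∀ i, (R i).1 ∈ gensL := by decide +kernel

theorem unit_mem : ∀ j : Fin 28, 2 ^ (j : ℕ) ∈ gensL := by decide +kernel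

theorem BBT : ∀ l m : Fin 28, ∑ i, B l i * B m i = if l = m then -1 else 0 := by decide +kernel

/-- Oddness. -/
def od (a : ZMod 4) : Bool := a.val % 2 == 1

/-- Number of odd coordinates. -/
def ow (a : Fin 28 → ZMod 4) : ℕ := ∑ i, (od (a i)).toNat

/-- Membership of `(a | b)` in the code. -/
def InD (a b : Fin 28 → ZMod 4) : Prop := ∀ j, b j = ∑ i, a i * B i j

theorem leeVal_eq : ∀ z : ZMod 4, leeVal z = (od z).toNat + 2 * (if z = 2 then 1 else 0) := by
  decide

theorem lee_eq (a : Fin 28 → ZMod 4) :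
    leeWt a = ow a + 2 * ((List.finRange 28).filter (fun i => decide (a i = 2))).length := by
  have h : ((List.finRange 28).filter (fun i => decide (a i = 2))).length =
      ∑ i : Fin 28, if a i = 2 then 1 else 0 := by
    rw [← List.toFinset_card_of_nodup ((List.nodup_finRange 28).filter _),
      Finset.card_eq_sum_ones]
    have h' : ((List.finRange 28).filter (fun i => decide (a i = 2))).toFinset =
        Finset.univ.filter (fun i => a i = 2) := by
      ext i
      simp only [List.mem_toFinset, List.mem_filter, List.mem_finRange, true_and,
        decide_eq_true_eq, Finset.mem_filter, Finset.mem_univ]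
    rw [h', Finset.sum_filter]
  rw [h, Finset.mul_sum, ow, ← Finset.sum_add_distrib, leeWt]
  exact Finset.sum_congr rfl fun i _ => leeVal_eq (a i)

theorem sum_list (l : List (Fin 28)) (hl : l.Nodup) (p : Fin 28 → Bool)
    (hp : ∀ i, i ∈ l ↔ p i = true) (f : Fin 28 → ZMod 4) :
    (l.map f).sum = ∑ i, if p i then f i else 0 := by
  rw [← List.sum_toFinset f hl, ← Finset.sum_filter]
  congr 1
  ext i
  simp [hp]

theorem split_a : ∀ z : ZMod 4, z = (if od z then 1 else 0) + (if od z && decide (z = 3) then 2 else 0)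
    + (if z = 2 then 2 else 0) := by decide

theorem core (a b : Fin 28 → ZMod 4) (hab : InD a b) (idx : List (Fin 28)) (hnd : idx.Nodup)
    (hidx : ∀ i, i ∈ idx ↔ od (a i) = true) (hlen : idx.length ≤ 20)
    (hfull : full idx.length (idx.map R) = true) :
    12 ≤ ow a + ow b ∧ 17 ≤ leeWt a + leeWt b := by
  have hRl : ∀ r ∈ idx.map R, r.1 < 2 ^ 28 ∧ r.2 < 2 ^ 28 := by
    intro r hr
    obtain ⟨i, _, rfl⟩ := List.mem_map.1 hr
    exact R_lt i
  have hL := (planes_lt _ hRl).1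
  have hs := full_sound (idx.map R) hRl (by simpa using hlen) (by simpa using hfull)
  rw [List.length_map] at hs
  have hlenow : idx.length = ow a := by
    unfold ow
    rw [← List.toFinset_card_of_nodup hnd, Finset.card_eq_sum_ones]
    have : idx.toFinset = Finset.univ.filter (fun i => od (a i) = true) := by
      ext i; simp [hidx]
    rw [this, Finset.sum_filter]
    refine Finset.sum_congr rfl fun i _ => ?_
    cases od (a i) <;> rfl
  -- the entries of b
  have hbj : ∀ j : Fin 28, b j = val (planes (idx.map R)) j +
      ((∑ i, if od (a i) && decide (a i = 3) then 2 * B i j else 0) +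
        ∑ i, if a i = 2 then 2 * B i j else 0) := by
    intro j
    rw [hab j, planes_val, List.map_map]
    rw [sum_list idx hnd _ hidx, ← Finset.sum_add_distrib, ← Finset.sum_add_distrib]
    refine Finset.sum_congr rfl fun i _ => ?_
    conv_lhs => rw [split_a (a i)]
    simp only [Function.comp, R_val]
    split_ifs <;> ring
  have h2B : ∀ i j : Fin 28, 2 * B i j = e2 ((R i).1.testBit j) := by
    intro i j
    rw [← R_val, val, e2]
    cases (R i).1.testBit j <;> cases (R i).2.testBit j <;> decide
  have hbL : ∀ j : Fin 28, od (b j) = (planes (idx.map R)).1.testBit j := by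
    intro j
    have hev : ∀ (p : Fin 28 → Prop) [DecidablePred p],
        ∃ z : ZMod 4, (∑ i, if p i then 2 * B i j else 0) = 2 * z := by
      intro p _
      refine ⟨∑ i, if p i then B i j else 0, ?_⟩
      rw [Finset.mul_sum]
      refine Finset.sum_congr rfl fun i _ => ?_
      split_ifs <;> simp
    obtain ⟨z1, hz1⟩ := hev (fun i => (od (a i) && decide (a i = 3)) = true)
    obtain ⟨z2, hz2⟩ := hev (fun i => a i = 2)
    rw [hbj j, hz1, hz2, val]
    generalize (planes (idx.map R)).1.testBit j = p
    generalize (planes (idx.map R)).2.testBit j = q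
    clear hz1 hz2
    revert z1 z2 p q
    decide
  have hpc : pc (planes (idx.map R)).1 = ow b := by
    rw [pc_eq _ hL, ow]
    exact Finset.sum_congr rfl fun j _ => by rw [hbL]
  rw [hpc, hlenow] at hs
  refine ⟨hs.1, ?_⟩
  generalize hM : 268435455 ^^^ (planes (idx.map R)).1 = M at hs
  have hMb : ∀ j : ℕ, M.testBit j = (decide (j < 28) && !(planes (idx.map R)).1.testBit j) := by
    intro j
    rw [← hM, Nat.testBit_xor, show (268435455 : ℕ) = 2 ^ 28 - 1 by norm_num,
      Nat.testBit_two_pow_sub_one]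
    by_cases hj : j < 28
    · simp [hj]
    · rw [Nat.testBit_lt_two_pow (lt_of_lt_of_le hL (Nat.pow_le_pow_right (by norm_num)
        (by omega)))]
      simp [hj]
  have hK := hs.2 ((idx.filter (fun i => decide (a i = 3))).map (fun i => (R i).1 &&& M))
    (((List.finRange 28).filter (fun i => decide (a i = 2))).map (fun i => (R i).1 &&& M) ++
      ((List.finRange 28).filter (fun j => decide (b j = 2))).map (fun j : Fin 28 => 2 ^ (j : ℕ) &&& M))
    (by
      intro u hu
      obtain ⟨i, hi, rfl⟩ := List.mem_map.1 hu
      rw [List.map_map]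
      exact List.mem_map.2 ⟨i, (List.mem_filter.1 hi).1, rfl⟩)
    (by
      intro u hu
      rcases List.mem_append.1 hu with hu | hu
      · obtain ⟨i, hi, rfl⟩ := List.mem_map.1 hu
        exact List.mem_map.2 ⟨_, R_mem i, rfl⟩
      · obtain ⟨i, hi, rfl⟩ := List.mem_map.1 hu
        exact List.mem_map.2 ⟨_, unit_mem i, rfl⟩)
    (by
      apply Nat.eq_of_testBit_eq
      intro j
      apply e2_inj
      rw [Nat.testBit_and, Nat.testBit_xor, e2_xor, xl_e2, xl_e2, List.map_append,
        List.sum_append, List.map_map, List.map_map, List.map_map]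
      simp only [Function.comp_def, Nat.testBit_and]
      cases hj : M.testBit j with
      | false => simp [e2]
      | true =>
        simp only [Bool.and_true]
        have hjj := hMb j
        rw [hj] at hjj
        have hj28 : j < 28 := by
          by_contra hc; simp [hc] at hjj
        have hLj : (planes (idx.map R)).1.testBit j = false := by
          cases hq : (planes (idx.map R)).1.testBit j with
          | false => rfl
          | true => simp [hq] at hjj
        lift j to Fin 28 using hj28
        have e1 := sum_list _ (hnd.filter (fun i => decide (a i = 3)))
          (fun i => od (a i) && decide (a i = 3)) (by simp [hidx])
          (fun i => e2 ((R i).1.testBit j))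
        have e3 := sum_list _ ((List.nodup_finRange 28).filter (fun i => decide (a i = 2)))
          (fun i => decide (a i = 2)) (by simp) (fun i => e2 ((R i).1.testBit j))
        have e4 := sum_list _ ((List.nodup_finRange 28).filter (fun i => decide (b i = 2)))
          (fun i => decide (b i = 2)) (by simp) (fun i => e2 ((2 ^ (i : ℕ)).testBit j))
        have e5 : (∑ i : Fin 28, if decide (b i = 2) = true then
            e2 ((2 ^ (i : ℕ)).testBit j) else 0) = if b j = 2 then 2 else 0 := by
          rw [Finset.sum_eq_single j]
          · simp [e2]
          · intro i _ hij
            have : (i : ℕ) ≠ j := fun h => hij (Fin.ext h)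
            simp [e2, this]
          · simp
        rw [e1, e3, e4, e5]
        have hb' := hbj j
        have hodd := hbL j
        simp only [val, hLj, h2B] at hb' hodd
        simp only [decide_eq_true_eq]
        have hdbl : ∀ p : Fin 28 → Prop, ∀ [DecidablePred p],
            2 * (∑ i, if p i then e2 ((R i).1.testBit j) else 0) = 0 := by
          intro p _
          rw [Finset.mul_sum]
          refine Finset.sum_eq_zero fun i _ => ?_
          have he : ∀ b, 2 * e2 b = 0 := by decide
          split_ifs
          · exact he _
          · exact mul_zero _
        have h1 := hdbl (fun i => (od (a i) && decide (a i = 3)) = true)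
        have h2 := hdbl (fun i => a i = 2)
        generalize (∑ i, if (od (a i) && decide (a i = 3)) = true then
          e2 ((R i).1.testBit j) else 0) = s1 at hb' h1 ⊢
        generalize (∑ i, if a i = 2 then e2 ((R i).1.testBit j) else 0) = s2 at hb' h2 ⊢
        generalize (planes (idx.map R)).2.testBit j = q at hb' ⊢
        generalize b j = bj at hb' hodd ⊢
        clear hj hjj hLj hbj hbL h2B e1 e3 e4 e5 hdbl
        revert s1 s2 q bj
        decide)
  rw [List.length_append, List.length_map, List.length_map] at hK
  rw [lee_eq a, lee_eq b]
  omega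

/-! ### Symmetries -/

/-- Number of odd coordinates apart from the first one. -/
def ow' (a : Fin 28 → ZMod 4) : ℕ := ∑ i : Fin 27, (od (a i.succ)).toNat

theorem ow_succ (a : Fin 28 → ZMod 4) : ow a = (od (a 0)).toNat + ow' a := by
  rw [ow, ow', Fin.sum_univ_succ]

/-- The rotation of the coordinates. -/
def rot (t : Fin 27) : Fin 28 → Fin 28 := Fin.cases 0 (fun i => (i + t).succ)

theorem rot_bij (t : Fin 27) : Function.Bijective (rot t) := by
  rw [Fintype.bijective_iff_injective_and_card]
  refine ⟨?_, rfl⟩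
  intro i j
  refine Fin.cases ?_ (fun i => ?_) i <;> refine Fin.cases ?_ (fun j => ?_) j
  · intro _; rfl
  · intro h
    have h' : (0 : Fin 28) = (j + t).succ := h
    exact absurd h'.symm (Fin.succ_ne_zero _)
  · intro h
    have h' : (i + t).succ = (0 : Fin 28) := h
    exact absurd h' (Fin.succ_ne_zero _)
  · intro h
    have h' : (i + t).succ = (j + t).succ := h
    have := Fin.succ_injective _ h'
    rw [add_left_injective t this]

theorem B_rot (t : Fin 27) (i j : Fin 28) : B (rot t i) (rot t j) = B i j := by
  refine Fin.cases ?_ (fun i => ?_) i <;> refine Fin.cases ?_ (fun j => ?_) j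
  · rfl
  · rfl
  · rfl
  · show rv (j + t - (i + t)) = rv (j - i)
    rw [add_sub_add_right_eq_sub]

theorem InD_rot (t : Fin 27) (a b : Fin 28 → ZMod 4) (h : InD a b) :
    InD (a ∘ rot t) (b ∘ rot t) := by
  intro j
  show b (rot t j) = _
  rw [h (rot t j), ← (rot_bij t).sum_comp]
  exact Finset.sum_congr rfl fun i _ => by rw [B_rot]; rfl

/-- The reflection of the coordinates. -/
def flp : Fin 28 → Fin 28 := Fin.cases 0 (fun i => (-i).succ)

theorem flp_inv : Function.Involutive flp := by
  intro i
  refine Fin.cases ?_ (fun i => ?_) i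
  · rfl
  · show (- -i).succ = i.succ
    rw [neg_neg]

theorem B_flp (i j : Fin 28) : B (flp i) (flp j) = B j i := by
  refine Fin.cases ?_ (fun i => ?_) i <;> refine Fin.cases ?_ (fun j => ?_) j
  · rfl
  · rfl
  · rfl
  · show rv (-j - -i) = rv (i - j)
    congr 1
    abel

theorem InD_flp (a b : Fin 28 → ZMod 4) (h : InD a b) :
    InD (b ∘ flp) (fun j => - a (flp j)) := by
  intro j
  show - a (flp j) = ∑ i, b (flp i) * B i j
  have h1 : ∑ i, b (flp i) * B i j = ∑ i, b (flp i) * B (flp j) (flp i) :=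
    Finset.sum_congr rfl fun i _ => by rw [B_flp]
  rw [h1, flp_inv.bijective.sum_comp (fun i => b i * B (flp j) i)]
  have h2 : ∀ i, b i * B (flp j) i = ∑ l, a l * (B l i * B (flp j) i) := by
    intro i
    rw [h i, Finset.sum_mul]
    exact Finset.sum_congr rfl fun l _ => by rw [mul_assoc]
  rw [Finset.sum_congr rfl fun i _ => h2 i, Finset.sum_comm]
  have h3 : ∀ l, ∑ i, a l * (B l i * B (flp j) i) = a l * if l = flp j then -1 else 0 := by
    intro l
    rw [← Finset.mul_sum, BBT]
  rw [Finset.sum_congr rfl fun l _ => h3 l]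
  simp

theorem od_neg : ∀ z : ZMod 4, od (-z) = od z := by decide

theorem leeVal_neg : ∀ z : ZMod 4, leeVal (-z) = leeVal z := by decide

theorem od_iff : ∀ z : ZMod 4, od z = false ↔ 2 * z = 0 := by decide

theorem even_of_even (a b : Fin 28 → ZMod 4) (h : InD a b) (ha : ∀ i, od (a i) = false) :
    ∀ j, od (b j) = false := by
  intro j
  rw [od_iff, h j, Finset.mul_sum]
  refine Finset.sum_eq_zero fun i _ => ?_
  rw [← mul_assoc, (od_iff _).1 (ha i), zero_mul]

/-! ### The weight bound -/

theorem length_filter (f : Fin 27 → Bool) :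
    ((List.finRange 27).filter f).length = ∑ i, (f i).toNat := by
  rw [← List.toFinset_card_of_nodup ((List.nodup_finRange 27).filter _),
    Finset.card_eq_sum_ones]
  have h' : ((List.finRange 27).filter f).toFinset = Finset.univ.filter (fun i => f i = true) := by
    ext i
    simp only [List.mem_toFinset, List.mem_filter, List.mem_finRange, true_and,
      Finset.mem_filter, Finset.mem_univ]
  rw [h', Finset.sum_filter]
  refine Finset.sum_congr rfl fun i _ => ?_
  cases f i <;> rfl

theorem search (k : ℕ) (h1 : 1 ≤ k) (h8 : k ≤ 8) :
    ∃ mask, MaskOK k mask ∧ go k mask rows k 0 0 [] = true := by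
  interval_cases k
  · exact ⟨mask1, by unfold MaskOK; decide, go1⟩
  · exact ⟨mask2, by unfold MaskOK; decide, go2⟩
  · exact ⟨mask3, by unfold MaskOK; decide, go3⟩
  · exact ⟨mask4, by unfold MaskOK; decide, go4⟩
  · exact ⟨mask5, by unfold MaskOK; decide, go5⟩
  · exact ⟨mask6, by unfold MaskOK; decide, go6⟩
  · exact ⟨mask7, by unfold MaskOK; decide, go7⟩
  · exact ⟨mask8, by unfold MaskOK; decide, go8⟩

theorem R_zero : R 0 = row0 := by decide +kernel

theorem full_zero : full 1 [R 0] = true := by decide +kernel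

theorem key_good (a b : Fin 28 → ZMod 4) (hab : InD a b) (h1 : 1 ≤ ow' a) (h8 : ow' a ≤ 8)
    (hg : Good (ow' a) 0 ((List.finRange 27).map fun i => od (a i.succ))) :
    12 ≤ ow a + ow b ∧ 17 ≤ leeWt a + leeWt b := by
  obtain ⟨mask, hm, hgo⟩ := search (ow' a) h1 h8
  have hlen := length_filter (fun i => od (a i.succ))
  rw [rows_eq] at hgo
  obtain ⟨f1, f2⟩ := go_sound (fun i : Fin 27 => R i.succ) (fun i => R_lt i.succ)
    (fun i => od (a i.succ)) (ow' a) mask hm (List.finRange 27) (ow' a) 0 0 [] hgo h1 hlen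
    (by rw [planes_nil]) (by simp) hg
  rw [List.append_nil] at f1 f2
  generalize hI : ((List.finRange 27).filter (fun i => od (a i.succ))).reverse = I at f1 f2
  have hIl : I.length = ow' a := by rw [← hI, List.length_reverse]; exact hlen
  have hIn : I.Nodup := by
    rw [← hI, List.nodup_reverse]; exact (List.nodup_finRange 27).filter _
  have hIm : ∀ i, i ∈ I ↔ od (a i.succ) = true := by
    intro i
    rw [← hI, List.mem_reverse, List.mem_filter]
    simp
  have hmap : I.map (fun i => R i.succ) = (I.map Fin.succ).map R := by
    rw [List.map_map]; rfl
  rw [hmap] at f1 f2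
  have hn' : (I.map Fin.succ).Nodup := hIn.map (Fin.succ_injective _)
  have h0 : (0 : Fin 28) ∉ I.map Fin.succ := by
    intro h
    obtain ⟨i, _, hi⟩ := List.mem_map.1 h
    exact Fin.succ_ne_zero _ hi
  have hs : ∀ i : Fin 27, i.succ ∈ I.map Fin.succ ↔ od (a i.succ) = true := by
    intro i
    rw [← hIm i]
    exact ⟨fun h => by
      obtain ⟨j, hj, hji⟩ := List.mem_map.1 h
      rwa [← Fin.succ_injective _ hji], fun h => List.mem_map_of_mem h⟩
  have hl' : (I.map Fin.succ).length = ow' a := by rw [List.length_map, hIl]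
  cases hc : od (a 0) with
  | false =>
    refine core a b hab (I.map Fin.succ) hn' ?_ (by omega) (by rw [hl']; exact f1)
    intro i
    refine Fin.cases ?_ (fun i => hs i) i
    simp only [h0, hc, Bool.false_eq_true]
  | true =>
    refine core a b hab (0 :: I.map Fin.succ) (List.nodup_cons.2 ⟨h0, hn'⟩) ?_
      (by rw [List.length_cons]; omega) ?_
    · intro i
      refine Fin.cases ?_ (fun i => ?_) i
      · simp [hc]
      · rw [List.mem_cons, ← hs i]
        exact ⟨fun h => h.resolve_left (Fin.succ_ne_zero _), Or.inr⟩
    · rw [List.length_cons, hl', List.map_cons, R_zero]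
      exact f2

theorem ow'_rot (t : Fin 27) (a : Fin 28 → ZMod 4) : ow' (a ∘ rot t) = ow' a := by
  show ∑ i : Fin 27, (od (a (i + t).succ)).toNat = ∑ i : Fin 27, (od (a i.succ)).toNat
  exact Equiv.sum_comp (Equiv.addRight t) (fun i => (od (a i.succ)).toNat)

theorem ow'_flp (a : Fin 28 → ZMod 4) : ow' (a ∘ flp) = ow' a := by
  show ∑ i : Fin 27, (od (a (-i).succ)).toNat = ∑ i : Fin 27, (od (a i.succ)).toNat
  exact Equiv.sum_comp (Equiv.neg (Fin 27)) (fun i => (od (a i.succ)).toNat)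

theorem ow_comp (p : Fin 28 → Fin 28) (hp : Function.Bijective p) (a : Fin 28 → ZMod 4) :
    ow (a ∘ p) = ow a := hp.sum_comp (fun i => (od (a i)).toNat)

theorem leeWt_comp (p : Fin 28 → Fin 28) (hp : Function.Bijective p) (a : Fin 28 → ZMod 4) :
    leeWt (a ∘ p) = leeWt a := hp.sum_comp (fun i => leeVal (a i))

theorem key1 (a b : Fin 28 → ZMod 4) (hab : InD a b) (h8 : ow' a ≤ 8)
    (hodd : ∃ i, od (a i) = true) : 12 ≤ ow a + ow b ∧ 17 ≤ leeWt a + leeWt b := by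
  rcases Nat.eq_zero_or_pos (ow' a) with h0 | h1
  · have hz : ∀ i : Fin 27, od (a i.succ) = false := by
      intro i
      have := (Finset.sum_eq_zero_iff.1 h0) i (Finset.mem_univ i)
      cases hc : od (a i.succ) with
      | false => rfl
      | true => rw [hc] at this; cases this
    have h00 : od (a 0) = true := by
      obtain ⟨i, hi⟩ := hodd
      revert hi
      refine Fin.cases id (fun i hi => ?_) i
      rw [hz i] at hi
      cases hi
    refine core a b hab [0] (List.nodup_singleton _) ?_ (by simp) full_zero
    intro i
    refine Fin.cases ?_ (fun i => ?_) i
    · simp [h00]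
    · simp [hz i]
  · let g : ℕ → Bool := fun n => od (a (Fin.ofNat 27 n).succ)
    have hper : ∀ n, g (n + 27) = g n := by
      intro n
      have : Fin.ofNat 27 (n + 27) = Fin.ofNat 27 n := Fin.ext (by simp [Fin.ofNat])
      simp only [g, this]
    have hsum : ∑ i ∈ Finset.range 27, (g i).toNat = ow' a := by
      rw [Finset.sum_range, ow']
      refine Finset.sum_congr rfl fun i _ => ?_
      have : Fin.ofNat 27 (i : ℕ) = i := Fin.ext (Nat.mod_eq_of_lt i.isLt)
      simp only [g, this]
    obtain ⟨t, ht, hgood⟩ := cycle_lemma g (ow' a) (by omega) hper hsum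
    have hgood' : Good (ow' (a ∘ rot ⟨t, ht⟩)) 0
        ((List.finRange 27).map fun i => od ((a ∘ rot ⟨t, ht⟩) i.succ)) := by
      rw [ow'_rot]
      convert hgood using 1
      apply List.ext_getElem
      · simp
      · intro n hn1 hn2
        have hn : n < 27 := by simpa using hn2
        rw [List.getElem_map, List.getElem_map, List.getElem_range, List.getElem_finRange]
        have hF : (⟨n, hn⟩ + ⟨t, ht⟩ : Fin 27) = Fin.ofNat 27 (t + n) := by
          apply Fin.ext
          rw [Fin.val_add, Nat.add_comm]
          rfl
        show od (a (⟨n, hn⟩ + ⟨t, ht⟩ : Fin 27).succ) = od (a (Fin.ofNat 27 (t + n)).succ)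
        rw [hF]
    have := key_good _ _ (InD_rot ⟨t, ht⟩ a b hab) (by rw [ow'_rot]; exact h1)
      (by rw [ow'_rot]; exact h8) hgood'
    rwa [ow_comp _ (rot_bij _), ow_comp _ (rot_bij _), leeWt_comp _ (rot_bij _),
      leeWt_comp _ (rot_bij _)] at this

theorem key (a b : Fin 28 → ZMod 4) (hab : InD a b)
    (hodd : ∃ i, od (a i) = true) : 12 ≤ ow a + ow b ∧ 17 ≤ leeWt a + leeWt b := by
  by_cases ha : ow' a ≤ 8
  · exact key1 a b hab ha hodd
  by_cases hb : ow' b ≤ 8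
  · have hsw := InD_flp a b hab
    have hodd' : ∃ i, od ((b ∘ flp) i) = true := by
      by_contra hc
      have hall : ∀ i, od ((b ∘ flp) i) = false := fun i =>
        Bool.eq_false_iff.2 fun h => hc ⟨i, h⟩
      have h2 := even_of_even _ _ hsw hall
      obtain ⟨i, hi⟩ := hodd
      have h3 := h2 (flp i)
      rw [od_neg, flp_inv i, hi] at h3
      cases h3
    have h := key1 _ _ hsw (by rw [ow'_flp]; exact hb) hodd'
    have e1 : ow (fun j => - a (flp j)) = ow a := by
      rw [← ow_comp _ flp_inv.bijective a]
      exact Finset.sum_congr rfl fun i _ => by rw [od_neg]; rfl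
    have e2 : leeWt (fun j => - a (flp j)) = leeWt a := by
      rw [← leeWt_comp _ flp_inv.bijective a]
      exact Finset.sum_congr rfl fun i _ => by rw [leeVal_neg]; rfl
    rw [e1, e2, ow_comp _ flp_inv.bijective, leeWt_comp _ flp_inv.bijective] at h
    omega
  · have h1 := ow_succ a
    have h2 := ow_succ b
    have h3 := lee_eq a
    have h4 := lee_eq b
    omega

theorem mem_D (x : Fin 28 ⊕ Fin 28 → ZMod 4) :
    x ∈ bdcCode 0 1 1 rv ↔ InD (x ∘ Sum.inl) (x ∘ Sum.inr) := by
  rw [bdcCode, Submodule.mem_span_range_iff_exists_fun]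
  have hsum : ∀ c : Fin 28 → ZMod 4, ∀ s, (∑ i, c i • bdcRow 0 1 1 rv i) s =
      ∑ i, c i * bdcRow 0 1 1 rv i s := by
    intro c s
    rw [Finset.sum_apply]
    rfl
  have hl : ∀ c : Fin 28 → ZMod 4, ∀ j, ∑ i, c i * bdcRow 0 1 1 rv i (Sum.inl j) = c j := by
    intro c j
    simp [bdcRow]
  constructor
  · rintro ⟨c, rfl⟩ j
    show (∑ i, c i • bdcRow 0 1 1 rv i) (Sum.inr j) = _
    rw [hsum]
    refine Finset.sum_congr rfl fun i _ => ?_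
    have h1 : (∑ i, c i • bdcRow 0 1 1 rv i) (Sum.inl i) = c i := by rw [hsum, hl]
    rw [Function.comp_apply, h1]
    rfl
  · intro h
    refine ⟨x ∘ Sum.inl, ?_⟩
    funext s
    rw [hsum]
    cases s with
    | inl j => rw [hl]; rfl
    | inr j => exact (h j).symm

theorem lee_sum (x : Fin 28 ⊕ Fin 28 → ZMod 4) :
    leeWt x = leeWt (x ∘ Sum.inl) + leeWt (x ∘ Sum.inr) := Fintype.sum_sum_type _

theorem bound17 (x : Fin 28 ⊕ Fin 28 → ZMod 4) (hx : x ∈ bdcCode 0 1 1 rv) (h0 : x ≠ 0) :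
    17 ≤ leeWt x := by
  rw [mem_D] at hx
  rw [lee_sum]
  by_cases hodd : ∃ i, od ((x ∘ Sum.inl) i) = true
  · exact (key _ _ hx hodd).2
  generalize ha : x ∘ Sum.inl = a at hx hodd ⊢
  generalize hb : x ∘ Sum.inr = b at hx ⊢
  have hall : ∀ i, od (a i) = false := fun i => Bool.eq_false_iff.2 fun h => hodd ⟨i, h⟩
  let c : Fin 28 → ZMod 4 := fun i => if a i = 2 then 1 else 0
  let d : Fin 28 → ZMod 4 := fun j => ∑ i, c i * B i j
  have hac : ∀ i, a i = 2 * c i := by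
    intro i
    have : ∀ z : ZMod 4, od z = false → z = 2 * (if z = 2 then 1 else 0) := by decide
    exact this _ (hall i)
  have hbd : ∀ j, b j = 2 * d j := by
    intro j
    rw [hx j, Finset.mul_sum]
    exact Finset.sum_congr rfl fun i _ => by rw [hac i, mul_assoc]
  have hco : ∃ i, od (c i) = true := by
    by_contra hc
    have hc0 : ∀ i, a i = 0 := by
      intro i
      rw [hac i]
      exact (od_iff _).1 (Bool.eq_false_iff.2 fun h => hc ⟨i, h⟩)
    have hb0 : ∀ j, b j = 0 := by
      intro j
      rw [hx j]
      exact Finset.sum_eq_zero fun i _ => by rw [hc0 i, zero_mul]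
    apply h0
    funext s
    cases s with
    | inl i => exact (congrFun ha i).trans (hc0 i)
    | inr i => exact (congrFun hb i).trans (hb0 i)
  have h12 := (key c d (fun j => rfl) hco).1
  have h2 : ∀ z : ZMod 4, leeVal (2 * z) = 2 * (od z).toNat := by decide
  have e1 : leeWt a = 2 * ow c := by
    rw [ow, Finset.mul_sum]
    exact Finset.sum_congr rfl fun i _ => by rw [hac i, h2]
  have e2 : leeWt b = 2 * ow d := by
    rw [ow, Finset.mul_sum]
    exact Finset.sum_congr rfl fun i _ => by rw [hbd i, h2]
  omega

/-! ### Self-duality -/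

theorem BTB (l m : Fin 28) : ∑ i, B i l * B i m = if l = m then -1 else 0 := by
  have h1 : ∑ i, B i l * B i m = ∑ i, B (flp l) (flp i) * B (flp m) (flp i) :=
    Finset.sum_congr rfl fun i _ => by rw [B_flp, B_flp]
  rw [h1, flp_inv.bijective.sum_comp (fun i => B (flp l) i * B (flp m) i), BBT]
  simp only [flp_inv.injective.eq_iff]

theorem dot_rr (a b a' b' : Fin 28 → ZMod 4) (h : InD a b) (h' : InD a' b') :
    ∑ j, b j * b' j = - ∑ i, a i * a' i := by
  have h2 : ∀ j, b j * b' j = ∑ l, ∑ m, a l * a' m * (B l j * B m j) := by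
    intro j
    rw [h j, h' j, Finset.sum_mul_sum]
    refine Finset.sum_congr rfl fun l _ => Finset.sum_congr rfl fun m _ => by ring
  rw [Finset.sum_congr rfl fun j _ => h2 j, Finset.sum_comm, ← Finset.sum_neg_distrib]
  refine Finset.sum_congr rfl fun l _ => ?_
  rw [Finset.sum_comm]
  have h3 : ∀ m, ∑ j, a l * a' m * (B l j * B m j) = a l * a' m * if l = m then -1 else 0 := by
    intro m
    rw [← Finset.mul_sum, BBT]
  rw [Finset.sum_congr rfl fun m _ => h3 m]
  simp

theorem dot_D (x y : Fin 28 ⊕ Fin 28 → ZMod 4) (hx : x ∈ bdcCode 0 1 1 rv)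
    (hy : y ∈ bdcCode 0 1 1 rv) : ∑ i, x i * y i = 0 := by
  rw [Fintype.sum_sum_type]
  have := dot_rr _ _ _ _ ((mem_D x).1 hx) ((mem_D y).1 hy)
  simp only [Function.comp] at this
  rw [this, add_neg_cancel]

theorem selfDual : SelfDualZ4 (bdcCode 0 1 1 rv) := by
  apply Set.eq_of_subset_of_subset
  · intro x hx y hy
    exact dot_D x y hx hy
  · intro x hx
    show x ∈ bdcCode 0 1 1 rv
    rw [mem_D]
    have hrow : ∀ l, x (Sum.inl l) = - ∑ j, x (Sum.inr j) * B l j := by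
      intro l
      have := hx (bdcRow 0 1 1 rv l) (Submodule.subset_span ⟨l, rfl⟩)
      rw [Fintype.sum_sum_type] at this
      have e1 : ∑ i, x (Sum.inl i) * bdcRow 0 1 1 rv l (Sum.inl i) = x (Sum.inl l) := by
        simp [bdcRow]
      rw [e1] at this
      exact eq_neg_of_add_eq_zero_left this
    intro m
    show x (Sum.inr m) = ∑ i, x (Sum.inl i) * B i m
    have h2 : ∀ i, x (Sum.inl i) * B i m = ∑ j, - x (Sum.inr j) * (B i j * B i m) := by
      intro i
      rw [hrow i, ← Finset.sum_neg_distrib, Finset.sum_mul]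
      exact Finset.sum_congr rfl fun j _ => by ring
    rw [Finset.sum_congr rfl fun i _ => h2 i, Finset.sum_comm]
    have h3 : ∀ j, ∑ i, - x (Sum.inr j) * (B i j * B i m) =
        - x (Sum.inr j) * if j = m then -1 else 0 := by
      intro j
      rw [← Finset.mul_sum, BTB]
    rw [Finset.sum_congr rfl fun j _ => h3 j]
    simp

theorem euc_four (x : Fin 28 ⊕ Fin 28 → ZMod 4) (hx : x ∈ bdcCode 0 1 1 rv) : 4 ∣ eucWt x := by
  rw [← ZMod.natCast_eq_zero_iff, eucWt, Nat.cast_sum, ← dot_D x x hx hx]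
  refine Finset.sum_congr rfl fun i _ => ?_
  have : ∀ z : ZMod 4, ((leeVal z ^ 2 : ℕ) : ZMod 4) = z * z := by decide
  exact this _

theorem lee_two (x : Fin 28 ⊕ Fin 28 → ZMod 4) (hx : x ∈ bdcCode 0 1 1 rv) : 2 ∣ leeWt x := by
  have h4 : 2 ∣ eucWt x := dvd_trans (by norm_num) (euc_four x hx)
  have : ((leeWt x : ℕ) : ZMod 2) = (eucWt x : ℕ) := by
    rw [leeWt, eucWt, Nat.cast_sum, Nat.cast_sum]
    refine Finset.sum_congr rfl fun i _ => ?_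
    have : ∀ z : ZMod 4, ((leeVal z : ℕ) : ZMod 2) = ((leeVal z ^ 2 : ℕ) : ZMod 2) := by decide
    exact this _
  rw [← ZMod.natCast_eq_zero_iff] at h4 ⊢
  rw [this, h4]

theorem lee_le_euc (x : Fin 28 ⊕ Fin 28 → ZMod 4) : leeWt x ≤ eucWt x :=
  Finset.sum_le_sum fun i _ => Nat.le_self_pow (by norm_num) _

/-- The left half of a codeword of minimum weight. -/
def wa : Fin 28 → ZMod 4 :=
  ![1, 3, 1, 1, 0, 0, 2, 0, 0, 1, 0, 0, 0, 0, 0, 0, 0, 0, 0, 0, 0, 0, 0, 0, 0, 0, 0, 0]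

/-- The right half of a codeword of minimum weight. -/
def wb : Fin 28 → ZMod 4 :=
  ![0, 1, 1, 0, 0, 0, 1, 0, 0, 3, 3, 1, 1, 0, 3, 3, 0, 0, 0, 3, 0, 0, 0, 0, 0, 0, 3, 0]

theorem w_mem : Sum.elim wa wb ∈ bdcCode 0 1 1 rv := by
  rw [mem_D]
  show ∀ j, wb j = ∑ i, wa i * B i j
  decide +kernel

theorem w_lee : leeWt (Sum.elim wa wb) = 18 := by
  rw [leeWt, Fintype.sum_sum_type]
  decide +kernel

theorem w_euc : eucWt (Sum.elim wa wb) = 20 := by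
  rw [eucWt, Fintype.sum_sum_type]
  decide +kernel

theorem w_ne : Sum.elim wa wb ≠ 0 := by
  intro h
  have h1 : wa 0 = 0 := congrFun h (Sum.inl 0)
  revert h1
  decide

theorem main : SelfDualZ4 (bdcCode 0 1 1 rv) ∧
    ¬ TypeII (bdcCode 0 1 1 rv : Set ((Fin 28 ⊕ Fin 28) → ZMod 4)) ∧
    minLee (bdcCode 0 1 1 rv : Set ((Fin 28 ⊕ Fin 28) → ZMod 4)) = 18 ∧
    minEuc (bdcCode 0 1 1 rv : Set ((Fin 28 ⊕ Fin 28) → ZMod 4)) = 20 := by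
  refine ⟨selfDual, ?_, ?_, ?_⟩
  · intro h
    have := h _ w_mem
    rw [w_euc] at this
    omega
  · apply le_antisymm
    · exact Nat.sInf_le ⟨_, w_mem, w_ne, w_lee⟩
    · refine le_csInf ⟨_, _, w_mem, w_ne, w_lee⟩ ?_
      rintro d ⟨x, hx, h0, rfl⟩
      have h1 := bound17 x hx h0
      have h2 := lee_two x hx
      omega
  · apply le_antisymm
    · exact Nat.sInf_le ⟨_, w_mem, w_ne, w_euc⟩
    · refine le_csInf ⟨_, _, w_mem, w_ne, w_euc⟩ ?_
      rintro d ⟨x, hx, h0, rfl⟩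
      have h1 := bound17 x hx h0
      have h2 := euc_four x hx
      have h3 := lee_le_euc x
      omega

end Z4Aux

open Z4Note in
/-- the bordered double circulant code `D_{56,2}` is a self-dual Type I
`ZMod 4`-code with minimum Lee weight 18 and minimum Euclidean weight 20. -/
theorem bdc_code_D56_2_properties :
    let D : Submodule (ZMod 4) ((Fin 28 ⊕ Fin 28) → ZMod 4) :=
      bdcCode 0 1 1
        ![0,0,2,2,0,2,0,0,2,0,0,2,3,1,2,0,1,0,1,0,1,1,1,1,0,1,1]
    SelfDualZ4 D ∧ ¬ TypeII (D : Set ((Fin 28 ⊕ Fin 28) → ZMod 4)) ∧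
    minLee (D : Set ((Fin 28 ⊕ Fin 28) → ZMod 4)) = 18 ∧
    minEuc (D : Set ((Fin 28 ⊕ Fin 28) → ZMod 4)) = 20 := by
  exact Z4Aux.main
end
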